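/- Let Q be an affine quiver and let α be a positive real root with nonzero defect, e(δ, α) ≠ 0 (an irregular root). Define the canonical weight λ_α ∈ Hom(ℤ^{Q_0}, ℤ) by λ_α(β) = e(α, β) − e(β, α). Then every λ_α-stable representation of the preprojective algebra Π_Q over ℂ with dimension vector α is isomorphic, as a representation of Π_Q, to the representation P̃_α obtained from the unique indecomposable representation P_α of Q of dimension vector α by letting all reverse arrows act as zero. In particular, up to isomorphism there is exactly one λ_α-stable Π_Q-representation of dimension vector α. -/

import Mathlib

open scoped BigOperators

/-- A finite quiver: finite sets of vertices and arrows with source and target maps. -/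
structure FinQuiver where
  V : Type
  A : Type
  [fintypeV : Fintype V]
  [fintypeA : Fintype A]
  [decEqV : DecidableEq V]
  src : A → V
  tgt : A → V

attribute [instance] FinQuiver.fintypeV FinQuiver.fintypeA FinQuiver.decEqV

namespace FinQuiver

variable (Q : FinQuiver)

/-- The Euler form of a finite quiver. -/
def eulerForm (x y : Q.V → ℤ) : ℤ :=
  (∑ i : Q.V, x i * y i) - ∑ a : Q.A, x (Q.src a) * y (Q.tgt a)

/-- The Tits form of a finite quiver. -/
def titsForm (x : Q.V → ℤ) : ℤ := Q.eulerForm x x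

/-- The quiver has no loops. -/
def NoLoops : Prop := ∀ a : Q.A, Q.src a ≠ Q.tgt a

/-- The underlying (simple) graph of a quiver without loops. -/
def graph : SimpleGraph Q.V where
  Adj i j := i ≠ j ∧ ∃ a : Q.A, (Q.src a = i ∧ Q.tgt a = j) ∨ (Q.src a = j ∧ Q.tgt a = i)
  symm := by
    constructor
    rintro i j ⟨hij, a, h⟩
    exact ⟨hij.symm, a, h.symm⟩
  loopless := by
    constructor
    rintro i ⟨hii, -⟩
    exact hii rfl

/-- The quiver has no oriented cycles. -/
def Acyclic : Prop :=
  ¬ ∃ (n : ℕ) (g : Fin (n + 1) → Q.A), ∀ k, Q.tgt (g k) = Q.src (g (k + 1))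

/-- The double quiver: for each arrow `a : i → j` add a reverse arrow `a* : j → i`. -/
def double : FinQuiver where
  V := Q.V
  A := Q.A ⊕ Q.A
  src := Sum.elim Q.src Q.tgt
  tgt := Sum.elim Q.tgt Q.src

/-- Positive roots: nonzero, nonnegative integer vectors with Tits form at most 1. -/
def PosRoot (x : Q.V → ℤ) : Prop := (∀ i, 0 ≤ x i) ∧ x ≠ 0 ∧ Q.titsForm x ≤ 1

end FinQuiver

/-- An affine quiver: connected, no loops, no oriented cycles, Tits form positive
semidefinite but not positive definite; `δ` is the minimal positive imaginary root,
generating the radical of the symmetrized Euler form. -/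
structure AffineQuiver extends FinQuiver where
  noLoops : toFinQuiver.NoLoops
  connected : toFinQuiver.graph.Connected
  acyclic : toFinQuiver.Acyclic
  posSemidef : ∀ x : V → ℤ, 0 ≤ toFinQuiver.titsForm x
  notPosDef : ∃ x : V → ℤ, x ≠ 0 ∧ toFinQuiver.titsForm x = 0
  δ : V → ℤ
  delta_pos : ∀ i, 0 < δ i
  radical_iff : ∀ x : V → ℤ,
    (∀ y : V → ℤ, toFinQuiver.eulerForm x y + toFinQuiver.eulerForm y x = 0) ↔
      ∃ m : ℤ, x = m • δ

/-- The defect `∂(x) = e(δ, x)`. -/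
def AffineQuiver.defect (Q : AffineQuiver) (x : Q.V → ℤ) : ℤ :=
  Q.eulerForm Q.δ x

/-- A finite-dimensional representation of a finite quiver over a field `k`. -/
structure QRep (Q : FinQuiver) (k : Type) [Field k] where
  carrier : Q.V → Type
  [acgI : ∀ i, AddCommGroup (carrier i)]
  [modI : ∀ i, Module k (carrier i)]
  [fdI : ∀ i, FiniteDimensional k (carrier i)]
  map : ∀ a : Q.A, carrier (Q.src a) →ₗ[k] carrier (Q.tgt a)

attribute [instance] QRep.acgI QRep.modI QRep.fdI

namespace QRep

variable {Q : FinQuiver} {k : Type} [Field k]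

/-- The dimension vector of a representation. -/
noncomputable def dimVec (X : QRep Q k) : Q.V → ℤ :=
  fun i => (Module.finrank k (X.carrier i) : ℤ)

end QRep

/-- A subrepresentation: a family of subspaces stable under all the arrow maps. -/
structure SubRep {Q : FinQuiver} {k : Type} [Field k] (X : QRep Q k) where
  mod : ∀ i, Submodule k (X.carrier i)
  stable : ∀ a : Q.A, ∀ x ∈ mod (Q.src a), X.map a x ∈ mod (Q.tgt a)

namespace SubRep

variable {Q : FinQuiver} {k : Type} [Field k] {X : QRep Q k}

/-- The dimension vector of a subrepresentation. -/
noncomputable def dimVec (U : SubRep X) : Q.V → ℤ :=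
  fun i => (Module.finrank k (U.mod i) : ℤ)

/-- The representation carried by a subrepresentation. -/
def toRep (U : SubRep X) : QRep Q k where
  carrier i := U.mod i
  map a := (X.map a).restrict (U.stable a)

end SubRep

namespace QRep

variable {Q : FinQuiver} {k : Type} [Field k]

/-- The quotient representation by a subrepresentation. -/
def quotBy (X : QRep Q k) (U : SubRep X) : QRep Q k where
  carrier i := X.carrier i ⧸ U.mod i
  map a := Submodule.mapQ _ _ (X.map a) (fun x hx => U.stable a x hx)

/-- A representation is indecomposable if it is nonzero and is not the internal direct
sum of two nonzero subrepresentations. -/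
def Indecomposable (X : QRep Q k) : Prop :=
  (∃ i, 0 < Module.finrank k (X.carrier i)) ∧
    ∀ U W : SubRep X, (∀ i, IsCompl (U.mod i) (W.mod i)) →
      (∀ i, U.mod i = ⊥) ∨ (∀ i, W.mod i = ⊥)

end QRep

/-- An isomorphism of representations of a quiver. -/
structure RepIso {Q : FinQuiver} {k : Type} [Field k] (X Y : QRep Q k) where
  equiv : ∀ i, X.carrier i ≃ₗ[k] Y.carrier i
  comm : ∀ (a : Q.A) (x : X.carrier (Q.src a)),
    equiv (Q.tgt a) (X.map a x) = Y.map a (equiv (Q.src a) x)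

section Preprojective

variable {Q : FinQuiver} {k : Type} [Field k]

/-- The endomorphism of `⊕ᵢ Xᵢ` induced by the map attached to a single arrow. -/
def arrowEnd (X : QRep Q k) (a : Q.A) :
    (∀ i, X.carrier i) →ₗ[k] (∀ i, X.carrier i) :=
  (LinearMap.single k X.carrier (Q.tgt a)).comp
    ((X.map a).comp (LinearMap.proj (Q.src a)))

/-- The preprojective relation for a representation of the double quiver:
at every vertex, `∑_{t(a)=i} X_a ∘ X_{a*} − ∑_{s(a)=i} X_{a*} ∘ X_a = 0`.
(Stated as one equation of endomorphisms of `⊕ᵢ Xᵢ`, which is equivalent since the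
`i`-component of the equation is exactly the relation at the vertex `i`.) -/
def PreprojRel (Q : FinQuiver) {k : Type} [Field k] (X : QRep Q.double k) : Prop :=
  (∑ a : Q.A, (arrowEnd X (Sum.inl a)).comp (arrowEnd X (Sum.inr a)))
    = ∑ a : Q.A, (arrowEnd X (Sum.inr a)).comp (arrowEnd X (Sum.inl a))

/-- Forget the reverse arrows: a representation of `Π_Q` gives a representation of `Q`. -/
def rho (X : QRep Q.double k) : QRep Q k where
  carrier := X.carrier
  acgI := X.acgI
  modI := X.modI
  fdI := X.fdI
  map a := X.map (Sum.inl a)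

/-- A subrepresentation of a `Π_Q`-representation is in particular a subrepresentation of
the underlying `Q`-representation. -/
def rhoSub {X : QRep Q.double k} (U : SubRep X) : SubRep (rho X) where
  mod := U.mod
  stable a x hx := U.stable (Sum.inl a) x hx

/-- A representation of the double quiver is ρ-fixed if all reverse arrows act as zero. -/
def RhoFixed (X : QRep Q.double k) : Prop :=
  ∀ a : Q.A, X.map (Sum.inr a) = 0

/-- Extend a representation of `Q` to the double quiver by letting all reverse arrows
act as zero. -/
def extendZero (P : QRep Q k) : QRep Q.double k where
  carrier := P.carrier
  acgI := P.acgI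
  modI := P.modI
  fdI := P.fdI
  map b := match b with
    | Sum.inl a => P.map a
    | Sum.inr _ => 0

end Preprojective

section SubQuot

variable {Q : FinQuiver} {k : Type} [Field k]

/-- The subquotient representation `W / U` attached to nested subrepresentations
`U ≤ W` of `Z`. -/
def subQuot (Z : QRep Q k) (U W : SubRep Z) (h : ∀ i, U.mod i ≤ W.mod i) : QRep Q k where
  carrier i := ↥(W.mod i) ⧸ (U.mod i).comap (W.mod i).subtype
  map a := Submodule.mapQ _ _ (W.toRep.map a)
    (fun x hx => U.stable a x.1 hx)

end SubQuot

/-- The canonical weight `λ_α(β) = e(α, β) − e(β, α)` attached to a root `α`. -/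
def canonicalWeight (Q : FinQuiver) (α β : Q.V → ℤ) : ℤ :=
  Q.eulerForm α β - Q.eulerForm β α

/-- `λ`-semistability and `λ`-stability of a representation of the double quiver with
respect to `Π_Q`-subrepresentations, for the weight `λ = λ_α`. -/
def LamAlphaStable {Q : FinQuiver} (α : Q.V → ℤ) (X : QRep Q.double ℂ) : Prop :=
  canonicalWeight Q α X.dimVec = 0 ∧
    (∀ U : SubRep X, canonicalWeight Q α U.dimVec ≤ 0) ∧
    ∀ U : SubRep X, (¬ ∀ i, U.mod i = ⊥) → (¬ ∀ i, U.mod i = ⊤) →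
      canonicalWeight Q α U.dimVec < 0

/-!
For representations `X` and `Y` of `Π_Q`, the trace pairing puts the standard complexes computing
`Hom(X, Y)` and `Hom(Y, X)` over the double quiver in duality, which gives Crawley-Boevey's
inequality `e(x, y) + e(y, x) ≤ dim Hom(X, Y) + dim Hom(Y, X)`. If both have dimension vector `α`,
the left-hand side is `2`, so there is a nonzero morphism in one of the two directions, and by
Schur's lemma stable representations joined by a nonzero morphism are isomorphic. It remains to see
that `P̃_α` is stable. For this it suffices that `P = P_α` is a brick: then `Ext(P, P) = 0` because
`q(α) = 1`, so a proper nonzero subrepresentation of dimension vector `β` satisfies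
`e(β, α) = dim Hom(U, P) > 0` and, since `Hom(P, U) = 0`, also `e(α, β) ≤ 0`.

That an indecomposable `P` of nonzero defect is a brick rests on a vanishing criterion:
`Ext(F, T) = 0` as soon as every nonzero subrepresentation of `F` has smaller defect than every
nonzero quotient of `T`. Applied to subrepresentations of maximal defect, it shows that all nonzero
subrepresentations of `P` have negative defect if `P` has, and dually for quotients and positive
defect. If `P` is not a brick, then, following Ringel, there are a proper subrepresentation `K` and
an indecomposable summand `L` of `K` with `P/K ⊆ L`. As `P` is indecomposable,
`Ext(P/K, L) ≠ 0` and hence `Ext(L, L) ≠ 0`. But `L` is a subrepresentation as well as the target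
of a nonzero map from `P`, so it has nonzero defect; by induction it is a brick, and `q > 0` away
from `ℤδ` forces `Ext(L, L) = 0`.

Finally, a representation of dimension vector `α` whose endomorphism ring has minimal dimension is
indecomposable: otherwise the extensions between its summands all split, so `α = x + y` with
`e(x, y)` and `e(y, x)` nonnegative, which is incompatible with `q(α) = 1` and `e(δ, α) ≠ 0`.
-/

/-! ### The Euler form -/

namespace FinQuiver

variable (Q : FinQuiver) (x x' y y' : Q.V → ℤ)

theorem eulerForm_add_left : Q.eulerForm (x + x') y = Q.eulerForm x y + Q.eulerForm x' y := by
  simp only [eulerForm, Pi.add_apply, add_mul, Finset.sum_add_distrib]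
  ring

theorem eulerForm_add_right : Q.eulerForm x (y + y') = Q.eulerForm x y + Q.eulerForm x y' := by
  simp only [eulerForm, Pi.add_apply, mul_add, Finset.sum_add_distrib]
  ring

theorem eulerForm_smul_left (n : ℤ) : Q.eulerForm (n • x) y = n * Q.eulerForm x y := by
  simp only [eulerForm, Pi.smul_apply, smul_eq_mul, mul_assoc, ← Finset.mul_sum, mul_sub]

theorem eulerForm_smul_right (n : ℤ) : Q.eulerForm x (n • y) = n * Q.eulerForm x y := by
  simp only [eulerForm, Pi.smul_apply, smul_eq_mul, mul_left_comm _ n, ← Finset.mul_sum, mul_sub]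

theorem eulerForm_add_eulerForm_swap :
    Q.eulerForm x y + Q.eulerForm y x = Q.double.eulerForm x y + ∑ i : Q.V, x i * y i := by
  have hdouble : Q.double.eulerForm x y = ∑ i : Q.V, x i * y i -
      (∑ a : Q.A, x (Q.src a) * y (Q.tgt a) + ∑ a : Q.A, x (Q.tgt a) * y (Q.src a)) :=
    congr_arg (∑ i : Q.V, x i * y i - ·) (Fintype.sum_sum_type _)
  rw [hdouble, eulerForm, eulerForm]
  simp only [mul_comm (y _)]
  ring

/-- The Euler form as a biadditive map. -/
def eulerHom : (Q.V → ℤ) →+ (Q.V → ℤ) →+ ℤ :=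
  AddMonoidHom.mk' (fun x => AddMonoidHom.mk' (Q.eulerForm x) (Q.eulerForm_add_right x))
    fun x x' => AddMonoidHom.ext (Q.eulerForm_add_left x x')

/-- The canonical weight `λ_x`, as a homomorphism on dimension vectors. -/
def canonicalWeightHom : (Q.V → ℤ) →+ ℤ :=
  Q.eulerHom x - Q.eulerHom.flip x

end FinQuiver

namespace AffineQuiver

variable (Q : AffineQuiver)

/-- The defect as a homomorphism on dimension vectors. -/
def defectHom : (Q.V → ℤ) →+ ℤ := Q.eulerHom Q.δ

@[simp]
theorem defectHom_apply (x : Q.V → ℤ) : Q.defectHom x = Q.defect x := rfl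

theorem eulerForm_delta_right (x : Q.V → ℤ) : Q.eulerForm x Q.δ = -Q.defect x := by
  have h := (Q.radical_iff Q.δ).2 ⟨1, (one_smul ℤ Q.δ).symm⟩ x
  rw [defect]
  linarith

theorem exists_eq_smul_delta {x : Q.V → ℤ} (hx : Q.titsForm x = 0) : ∃ m : ℤ, x = m • Q.δ := by
  refine (Q.radical_iff x).1 fun y => ?_
  set b := Q.eulerForm x y + Q.eulerForm y x
  have hline (n : ℤ) : 0 ≤ n * b + Q.titsForm y := by
    have h := Q.posSemidef (n • x + y)
    simp only [FinQuiver.titsForm, Q.eulerForm_add_left, Q.eulerForm_add_right,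
      Q.eulerForm_smul_left, Q.eulerForm_smul_right] at h hx ⊢
    rw [hx] at h
    linarith
  by_contra hne
  have hbsq : 0 < b ^ 2 := by positivity
  nlinarith [hline (b * (-Q.titsForm y - 1)), Q.posSemidef y]

theorem titsForm_pos {x : Q.V → ℤ} (hx : Q.defect x ≠ 0) : 0 < Q.titsForm x := by
  refine (Q.posSemidef x).lt_of_ne' fun h0 => hx ?_
  obtain ⟨m, rfl⟩ := Q.exists_eq_smul_delta h0
  have hδ := Q.eulerForm_delta_right Q.δ
  rw [defect] at hδ ⊢
  rw [Q.eulerForm_smul_right]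
  have : Q.eulerForm Q.δ Q.δ = 0 := by linarith
  rw [this, mul_zero]

variable {Q}

theorem defect_add_eq_zero_of_defect_eq_zero {x y : Q.V → ℤ} (hx : x ≠ 0)
    (hq : Q.titsForm (x + y) = 1) (hxy : 0 ≤ Q.eulerForm x y) (hyx : 0 ≤ Q.eulerForm y x)
    (hdx : Q.defect x = 0) : Q.defect (x + y) = 0 := by
  rw [← Q.defectHom_apply, map_add, Q.defectHom_apply, hdx, zero_add, Q.defectHom_apply]
  by_contra hdy
  have hqy := Q.titsForm_pos hdy
  have hqx := Q.posSemidef x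
  simp only [FinQuiver.titsForm, Q.eulerForm_add_left, Q.eulerForm_add_right] at hq hqx hqy
  obtain ⟨m, rfl⟩ := Q.exists_eq_smul_delta (x := x) (by rw [FinQuiver.titsForm]; linarith)
  rw [Q.eulerForm_smul_left] at hxy
  rw [Q.eulerForm_smul_right, Q.eulerForm_delta_right] at hyx
  have hm : m ≠ 0 := fun hm => hx (by rw [hm, zero_smul])
  exact mul_ne_zero hm hdy (le_antisymm (by linarith) hxy)

theorem defect_add_eq_zero {x y : Q.V → ℤ} (hx : x ≠ 0) (hy : y ≠ 0)
    (hq : Q.titsForm (x + y) = 1) (hxy : 0 ≤ Q.eulerForm x y) (hyx : 0 ≤ Q.eulerForm y x) :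
    Q.defect (x + y) = 0 := by
  by_cases hdx : Q.defect x = 0
  · exact defect_add_eq_zero_of_defect_eq_zero hx hq hxy hyx hdx
  by_cases hdy : Q.defect y = 0
  · rw [add_comm] at hq ⊢
    exact defect_add_eq_zero_of_defect_eq_zero hy hq hyx hxy hdy
  have hqx := Q.titsForm_pos hdx
  have hqy := Q.titsForm_pos hdy
  simp only [FinQuiver.titsForm, Q.eulerForm_add_left, Q.eulerForm_add_right] at hq hqx hqy
  linarith

end AffineQuiver

/-! ### The standard complex -/

namespace QRep

open Module

variable {Q : FinQuiver} {k : Type} [Field k]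

/-- The degree-zero term `∏ᵢ Hom(Xᵢ, Yᵢ)` of the standard complex computing `Hom` and `Ext` of
quiver representations. -/
abbrev VertexMaps (X Y : QRep Q k) : Type := ∀ i, X.carrier i →ₗ[k] Y.carrier i

/-- The degree-one term `∏ₐ Hom(X_{s(a)}, Y_{t(a)})` of the standard complex. -/
abbrev ArrowMaps (X Y : QRep Q k) : Type :=
  ∀ a, X.carrier (Q.src a) →ₗ[k] Y.carrier (Q.tgt a)

/-- The differential of the standard complex: its kernel is `Hom(X, Y)` and its cokernel is
`Ext(X, Y)`. -/
def homDiff (X Y : QRep Q k) : VertexMaps X Y →ₗ[k] ArrowMaps X Y where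
  toFun f a := Y.map a ∘ₗ f (Q.src a) - f (Q.tgt a) ∘ₗ X.map a
  map_add' f g := by
    ext a x
    simp only [Pi.add_apply, LinearMap.sub_apply, LinearMap.add_apply, LinearMap.comp_apply,
      map_add]
    abel
  map_smul' c f := by
    ext a x
    simp only [Pi.smul_apply, LinearMap.sub_apply, LinearMap.smul_apply, LinearMap.comp_apply,
      map_smul, RingHom.id_apply, smul_sub]

/-- The vector space of morphisms of representations. -/
abbrev Hom (X Y : QRep Q k) : Type := LinearMap.ker (homDiff X Y)

/-- The vanishing of `Ext(X, Y)`, read off the standard complex. -/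
def ExtVanishes (X Y : QRep Q k) : Prop := Function.Surjective (homDiff X Y)

section EulerCharacteristic

variable (X Y : QRep Q k)

theorem eulerForm_dimVec : Q.eulerForm X.dimVec Y.dimVec =
    finrank k (VertexMaps X Y) - finrank k (ArrowMaps X Y) := by
  simp only [FinQuiver.eulerForm, dimVec, finrank_pi_fintype, finrank_linearMap, Nat.cast_sum,
    Nat.cast_mul]

theorem finrank_range_homDiff_add :
    finrank k (LinearMap.range (homDiff X Y)) + finrank k (Hom X Y) = finrank k (VertexMaps X Y) :=
  (homDiff X Y).finrank_range_add_finrank_ker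

theorem eulerForm_le_finrank_hom : Q.eulerForm X.dimVec Y.dimVec ≤ finrank k (Hom X Y) := by
  have hrange := (LinearMap.range (homDiff X Y)).finrank_le
  have hsum := finrank_range_homDiff_add X Y
  rw [eulerForm_dimVec]
  omega

variable {X Y}

theorem extVanishes_iff :
    ExtVanishes X Y ↔ Q.eulerForm X.dimVec Y.dimVec = finrank k (Hom X Y) := by
  have hsum := finrank_range_homDiff_add X Y
  rw [ExtVanishes, ← LinearMap.range_eq_top, eulerForm_dimVec]
  constructor
  · intro htop
    rw [htop, finrank_top] at hsum
    omega
  · exact fun hfin => Submodule.eq_top_of_finrank_eq (by omega)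

theorem eulerForm_nonpos (h : ∀ f : Hom X Y, f = 0) : Q.eulerForm X.dimVec Y.dimVec ≤ 0 := by
  have : Subsingleton (Hom X Y) := ⟨fun f g => (h f).trans (h g).symm⟩
  have hle := eulerForm_le_finrank_hom X Y
  rwa [finrank_zero_of_subsingleton, Nat.cast_zero] at hle

end EulerCharacteristic

namespace Hom

variable {X Y Z W : QRep Q k}

theorem comm (f : Hom X Y) (a : Q.A) (x : X.carrier (Q.src a)) :
    f.1 (Q.tgt a) (X.map a x) = Y.map a (f.1 (Q.src a) x) :=
  (sub_eq_zero.1 (DFunLike.congr_fun (congr_fun f.2 a) x)).symm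

/-- A family of linear maps commuting with the arrows, bundled as a morphism. -/
def mk (f : VertexMaps X Y)
    (hf : ∀ a x, f (Q.tgt a) (X.map a x) = Y.map a (f (Q.src a) x)) : Hom X Y :=
  ⟨f, funext fun a => LinearMap.ext fun x => sub_eq_zero.2 (hf a x).symm⟩

/-- The identity morphism. -/
def id (X : QRep Q k) : Hom X X := mk (fun _ => LinearMap.id) fun _ _ => rfl

/-- The composite of two morphisms. -/
def comp (g : Hom Y Z) (f : Hom X Y) : Hom X Z :=
  mk (fun i => g.1 i ∘ₗ f.1 i) fun a x => by
    rw [LinearMap.comp_apply, f.comm, g.comm, LinearMap.comp_apply]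

theorem apply_eq_of_comp_eq {g : Hom Y Z} {f : Hom X Y} {h : Hom X Z} (hgf : g.comp f = h)
    (i : Q.V) (x : X.carrier i) : g.1 i (f.1 i x) = h.1 i x := by
  rw [← hgf]
  rfl

@[ext]
theorem ext {f g : Hom X Y} (h : ∀ i x, f.1 i x = g.1 i x) : f = g :=
  Subtype.ext (funext fun i => LinearMap.ext (h i))

/-- Composition as a bilinear map. -/
def compₗ : Hom Y Z →ₗ[k] Hom X Y →ₗ[k] Hom X Z :=
  LinearMap.mk₂ k comp (fun _ _ _ => rfl) (fun _ _ _ => rfl)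
    (fun g f f' => ext fun i x => map_add (g.1 i) (f.1 i x) (f'.1 i x))
    (fun c g f => ext fun i x => map_smul (g.1 i) c (f.1 i x))

theorem exists_comp_eq {ι : Hom Y Z} (hι : ∀ i, Function.Injective (ι.1 i)) (f : Hom X Z)
    (hf : ∀ i, LinearMap.range (f.1 i) ≤ LinearMap.range (ι.1 i)) :
    ∃ g : Hom X Y, ι.comp g = f := by
  choose ρ hρ using fun i =>
    (ι.1 i).exists_leftInverse_of_injective (LinearMap.ker_eq_bot.2 (hι i))
  have hfactor (i) (x : X.carrier i) : ι.1 i (ρ i (f.1 i x)) = f.1 i x := by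
    obtain ⟨y, hy⟩ := hf i (LinearMap.mem_range_self _ x)
    rw [← hy, ← LinearMap.comp_apply (ρ i), hρ, LinearMap.id_apply]
  refine ⟨mk (fun i => ρ i ∘ₗ f.1 i) fun a x => hι _ ?_, ext hfactor⟩
  rw [ι.comm, LinearMap.comp_apply, LinearMap.comp_apply, hfactor, hfactor, f.comm]

theorem exists_eq_comp {π : Hom X Y} (hπ : ∀ i, Function.Surjective (π.1 i)) (f : Hom X Z)
    (hf : ∀ i, LinearMap.ker (π.1 i) ≤ LinearMap.ker (f.1 i)) :
    ∃ g : Hom Y Z, g.comp π = f := by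
  choose σ hσ using fun i =>
    (π.1 i).exists_rightInverse_of_surjective (LinearMap.range_eq_top.2 (hπ i))
  have hfactor (i) (x : X.carrier i) : f.1 i (σ i (π.1 i x)) = f.1 i x := by
    refine LinearMap.sub_mem_ker_iff.1 (hf i (LinearMap.sub_mem_ker_iff.2 ?_))
    rw [← LinearMap.comp_apply (π.1 i), hσ, LinearMap.id_apply]
  refine ⟨mk (fun i => f.1 i ∘ₗ σ i) fun a y => ?_, ext hfactor⟩
  obtain ⟨x, rfl⟩ := hπ _ y
  rw [← π.comm, LinearMap.comp_apply, LinearMap.comp_apply, hfactor, hfactor, f.comm]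

end Hom

theorem ExtVanishes.of_injective {X Y Z : QRep Q k} (h : ExtVanishes Y Z) {ι : Hom X Y}
    (hι : ∀ i, Function.Injective (ι.1 i)) : ExtVanishes X Z := by
  intro w
  choose ρ hρ using fun i =>
    (ι.1 i).exists_leftInverse_of_injective (LinearMap.ker_eq_bot.2 (hι i))
  obtain ⟨g, hg⟩ := h fun a => w a ∘ₗ ρ (Q.src a)
  refine ⟨fun i => g i ∘ₗ ι.1 i, funext fun a => LinearMap.ext fun x => ?_⟩
  have hgx := DFunLike.congr_fun (congr_fun hg a) (ι.1 _ x)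
  rw [LinearMap.comp_apply, ← LinearMap.comp_apply (ρ _), hρ, LinearMap.id_apply] at hgx
  rw [← hgx]
  exact congr_arg (_ - g _ ·) (ι.comm a x)

/-- Short exact sequences `0 → U → X → W → 0` of representations. -/
structure ShortExact {U X W : QRep Q k} (ι : Hom U X) (π : Hom X W) : Prop where
  injective : ∀ i, Function.Injective (ι.1 i)
  surjective : ∀ i, Function.Surjective (π.1 i)
  ker_eq_range : ∀ i, LinearMap.ker (π.1 i) = LinearMap.range (ι.1 i)

namespace ShortExact

variable {U X W N : QRep Q k} {ι : Hom U X} {π : Hom X W}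

theorem exists_extension (h : ShortExact ι π) (hext : ExtVanishes W N) (r : Hom U N) :
    ∃ r' : Hom X N, r'.comp ι = r := by
  choose ρ hρ using fun i =>
    (ι.1 i).exists_leftInverse_of_injective (LinearMap.ker_eq_bot.2 (h.injective i))
  choose σ hσ using fun i =>
    (π.1 i).exists_rightInverse_of_surjective (LinearMap.range_eq_top.2 (h.surjective i))
  have hρ' (i) (u : U.carrier i) : ρ i (ι.1 i u) = u := DFunLike.congr_fun (hρ i) u
  have hπι (i) (u : U.carrier i) : π.1 i (ι.1 i u) = 0 :=
    LinearMap.mem_ker.1 (h.ker_eq_range i ▸ LinearMap.mem_range_self _ u)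
  set d := homDiff X N fun i => r.1 i ∘ₗ ρ i
  have hdι (a) (u : U.carrier (Q.src a)) : d a (ι.1 _ u) = 0 := by
    change N.map a (r.1 _ (ρ _ (ι.1 _ u))) - r.1 _ (ρ _ (X.map a (ι.1 _ u))) = 0
    rw [← ι.comm, hρ', hρ', r.comm, sub_self]
  have hdσ (a) (x : X.carrier (Q.src a)) : d a (σ _ (π.1 _ x)) = d a x := by
    rw [← sub_eq_zero, ← map_sub]
    obtain ⟨u, hu⟩ : σ _ (π.1 _ x) - x ∈ LinearMap.range (ι.1 _) := by
      rw [← h.ker_eq_range, LinearMap.sub_mem_ker_iff, ← LinearMap.comp_apply (π.1 _), hσ,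
        LinearMap.id_apply]
    rw [← hu, hdι]
  obtain ⟨g, hg⟩ := hext fun a => d a ∘ₗ σ _
  refine ⟨Hom.mk (fun i => r.1 i ∘ₗ ρ i - g i ∘ₗ π.1 i) fun a x => ?_, Hom.ext fun i u => ?_⟩
  · have hgx := (DFunLike.congr_fun (congr_fun hg a) (π.1 _ x)).trans (hdσ a x)
    change N.map a (g _ (π.1 _ x)) - g _ (W.map a (π.1 _ x)) =
      N.map a (r.1 _ (ρ _ x)) - r.1 _ (ρ _ (X.map a x)) at hgx
    simp only [LinearMap.sub_apply, LinearMap.comp_apply, map_sub, π.comm]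
    rw [sub_eq_sub_iff_add_eq_add] at hgx ⊢
    rw [add_comm, ← hgx, add_comm]
  · change r.1 i (ρ i (ι.1 i u)) - g i (π.1 i (ι.1 i u)) = r.1 i u
    rw [hρ', hπι, map_zero, sub_zero]

variable (N)

theorem finrank_hom_right_le (h : ShortExact ι π) :
    finrank k (Hom N X) ≤ finrank k (Hom N U) + finrank k (Hom N W) := by
  have hker : LinearMap.ker (Hom.compₗ (X := N) π) ≤ LinearMap.range (Hom.compₗ ι) := by
    refine fun f hf => Hom.exists_comp_eq h.injective f fun i => ?_
    rw [← h.ker_eq_range]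
    rintro _ ⟨x, rfl⟩
    exact Hom.apply_eq_of_comp_eq (LinearMap.mem_ker.1 hf) i x
  have hsum := (Hom.compₗ (X := N) π).finrank_range_add_finrank_ker
  have hrange := (LinearMap.range (Hom.compₗ (X := N) π)).finrank_le
  have hker' := (Submodule.finrank_mono hker).trans (LinearMap.finrank_range_le _)
  omega

theorem finrank_hom_left_le_add_range (h : ShortExact ι π) :
    finrank k (Hom X N) ≤
      finrank k (Hom W N) + finrank k (LinearMap.range ((Hom.compₗ (Z := N)).flip ι)) := by
  have hker : LinearMap.ker ((Hom.compₗ (Z := N)).flip ι) ≤ LinearMap.range (Hom.compₗ.flip π) := by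
    refine fun f hf => Hom.exists_eq_comp h.surjective f fun i => ?_
    rw [h.ker_eq_range]
    rintro _ ⟨u, rfl⟩
    exact Hom.apply_eq_of_comp_eq (LinearMap.mem_ker.1 hf) i u
  have hsum := ((Hom.compₗ (Z := N)).flip ι).finrank_range_add_finrank_ker
  have hker' := (Submodule.finrank_mono hker).trans (LinearMap.finrank_range_le _)
  omega

theorem finrank_hom_left_le (h : ShortExact ι π) :
    finrank k (Hom X N) ≤ finrank k (Hom W N) + finrank k (Hom U N) :=
  (h.finrank_hom_left_le_add_range N).trans (Nat.add_le_add_left (Submodule.finrank_le _) _)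

theorem finrank_hom_left_lt (h : ShortExact ι π) (hsplit : ¬∃ r : Hom X U, r.comp ι = Hom.id U) :
    finrank k (Hom X U) < finrank k (Hom W U) + finrank k (Hom U U) := by
  refine (h.finrank_hom_left_le_add_range U).trans_lt
    (Nat.add_lt_add_left (Submodule.finrank_lt ?_) _)
  exact fun htop => hsplit (LinearMap.range_eq_top.1 htop (Hom.id U))

end ShortExact

end QRep

/-! ### Subrepresentations -/

namespace SubRep

open Module QRep

variable {Q : FinQuiver} {k : Type} [Field k] {X Y : QRep Q k}

theorem mod_injective : Function.Injective (mod : SubRep X → _) := by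
  rintro ⟨U, -⟩ ⟨W, -⟩ rfl
  rfl

theorem map_le (U : SubRep X) (a : Q.A) : (U.mod (Q.src a)).map (X.map a) ≤ U.mod (Q.tgt a) :=
  Submodule.map_le_iff_le_comap.2 (U.stable a)

instance : PartialOrder (SubRep X) := PartialOrder.lift mod mod_injective

instance : Max (SubRep X) where
  max U W :=
    { mod := fun i => U.mod i ⊔ W.mod i
      stable := fun a => Submodule.map_le_iff_le_comap.1 <|
        (Submodule.map_sup _ _ _).trans_le (sup_le_sup (U.map_le a) (W.map_le a)) }

instance : Min (SubRep X) where
  min U W :=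
    { mod := fun i => U.mod i ⊓ W.mod i
      stable := fun a x hx => ⟨U.stable a x hx.1, W.stable a x hx.2⟩ }

instance : SupSet (SubRep X) where
  sSup S :=
    { mod := fun i => ⨆ U ∈ S, U.mod i
      stable := fun a => show _ ≤ Submodule.comap (X.map a) _ from iSup₂_le fun U hU =>
        le_trans (U.stable a) (Submodule.comap_mono
          (le_iSup₂ (f := fun (U : SubRep X) (_ : U ∈ S) => U.mod (Q.tgt a)) U hU)) }

instance : InfSet (SubRep X) where
  sInf S :=
    { mod := fun i => ⨅ U ∈ S, U.mod i
      stable := fun a x hx => by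
        simp only [Submodule.mem_iInf] at hx ⊢
        exact fun U hU => U.stable a x (hx U hU) }

instance : Top (SubRep X) where
  top := { mod := ⊤, stable := fun _ _ _ => trivial }

instance : Bot (SubRep X) where
  bot := { mod := ⊥, stable := fun a x hx => by rw [(Submodule.mem_bot k).1 hx, map_zero]; rfl }

instance : CompleteLattice (SubRep X) :=
  mod_injective.completeLattice mod Iff.rfl Iff.rfl (fun _ _ => rfl) (fun _ _ => rfl)
    (fun _ => by ext1 i; simp only [iSup_apply]; rfl)
    (fun _ => by ext1 i; simp only [iInf_apply]; rfl) rfl rfl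

theorem eq_bot_iff_mod (U : SubRep X) : U = ⊥ ↔ ∀ i, U.mod i = ⊥ :=
  mod_injective.eq_iff.symm.trans funext_iff

theorem eq_top_iff_mod (U : SubRep X) : U = ⊤ ↔ ∀ i, U.mod i = ⊤ :=
  mod_injective.eq_iff.symm.trans funext_iff

theorem isCompl_iff_mod {U W : SubRep X} : IsCompl U W ↔ ∀ i, IsCompl (U.mod i) (W.mod i) := by
  rw [← Pi.isCompl_iff (f := U.mod), isCompl_iff, isCompl_iff, disjoint_iff, disjoint_iff,
    codisjoint_iff, codisjoint_iff, ← mod_injective.eq_iff, ← mod_injective.eq_iff]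
  rfl

theorem exists_isGreatest {J : Type*} (s : J → Q.V) (K : ∀ j, Submodule k (X.carrier (s j))) :
    ∃ U, IsGreatest {U : SubRep X | ∀ j, U.mod (s j) ≤ K j} U :=
  ⟨sSup {U | ∀ j, U.mod (s j) ≤ K j}, fun j => iSup₂_le fun _ hU => hU j,
    fun _ hU => le_sSup hU⟩

theorem exists_isLeast {J : Type*} (s : J → Q.V) (K : ∀ j, Submodule k (X.carrier (s j))) :
    ∃ U, IsLeast {U : SubRep X | ∀ j, K j ≤ U.mod (s j)} U :=
  ⟨sInf {U | ∀ j, K j ≤ U.mod (s j)}, fun j => le_iInf₂ fun _ hU => hU j,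
    fun _ hU => sInf_le hU⟩

section Dimension

theorem dimVec_nonneg (U : SubRep X) (i : Q.V) : 0 ≤ U.dimVec i := Nat.cast_nonneg _

theorem dimVec_top : (⊤ : SubRep X).dimVec = X.dimVec :=
  funext fun _ => congr_arg Nat.cast (finrank_top k _)

theorem dimVec_bot : (⊥ : SubRep X).dimVec = 0 :=
  funext fun i => congr_arg Nat.cast (finrank_bot k (X.carrier i))

theorem dimVec_mono {U W : SubRep X} (h : U ≤ W) : U.dimVec ≤ W.dimVec :=
  fun i => Nat.cast_le.2 (Submodule.finrank_mono (h i))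

theorem eq_of_le_of_dimVec_eq {U W : SubRep X} (h : U ≤ W) (hdim : U.dimVec = W.dimVec) : U = W :=
  mod_injective <| funext fun i =>
    Submodule.eq_of_le_of_finrank_eq (h i) (Nat.cast_injective (congr_fun hdim i))

theorem dimVec_eq_zero {U : SubRep X} (h : U.dimVec = 0) : U = ⊥ :=
  (eq_of_le_of_dimVec_eq bot_le (dimVec_bot.trans h.symm)).symm

theorem eq_top_of_dimVec_eq {U : SubRep X} (h : U.dimVec = X.dimVec) : U = ⊤ :=
  eq_of_le_of_dimVec_eq le_top (h.trans dimVec_top.symm)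

end Dimension

/-- The inclusion of a subrepresentation, as a morphism. -/
def subtype (U : SubRep X) : Hom U.toRep X :=
  Hom.mk (fun i => (U.mod i).subtype) fun _ _ => rfl

/-- The projection onto the quotient by a subrepresentation, as a morphism. -/
def mkQ (U : SubRep X) : Hom X (X.quotBy U) :=
  Hom.mk (fun i => (U.mod i).mkQ) fun _ _ => rfl

theorem shortExact (U : SubRep X) : ShortExact U.subtype U.mkQ where
  injective i := (U.mod i).subtype_injective
  surjective i := (U.mod i).mkQ_surjective
  ker_eq_range i := (U.mod i).ker_mkQ.trans (U.mod i).range_subtype.symm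

theorem dimVec_add_dimVec_quotBy (U : SubRep X) : U.dimVec + (X.quotBy U).dimVec = X.dimVec :=
  funext fun i => by
    rw [Pi.add_apply, add_comm]
    exact congr_arg Nat.cast (Submodule.finrank_quotient_add_finrank (U.mod i))

/-- The image of a subrepresentation under a morphism. -/
def map (f : Hom X Y) (U : SubRep X) : SubRep Y where
  mod i := (U.mod i).map (f.1 i)
  stable := by
    rintro a _ ⟨x, hx, rfl⟩
    exact ⟨X.map a x, U.stable a x hx, f.comm a x⟩

/-- The preimage of a subrepresentation under a morphism. -/
def comap (f : Hom X Y) (U : SubRep Y) : SubRep X where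
  mod i := (U.mod i).comap (f.1 i)
  stable a x hx := by
    rw [Submodule.mem_comap, f.comm]
    exact U.stable a _ hx

theorem dimVec_map_of_injective {f : Hom X Y} (hf : ∀ i, Function.Injective (f.1 i))
    (U : SubRep X) : (U.map f).dimVec = U.dimVec :=
  funext fun i => congr_arg Nat.cast
    (LinearEquiv.finrank_eq (Submodule.equivMapOfInjective (f.1 i) (hf i) (U.mod i))).symm

theorem dimVec_map_add_dimVec_inf_ker (f : Hom X Y) (U : SubRep X) :
    (U.map f).dimVec + (U ⊓ comap f ⊥).dimVec = U.dimVec := by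
  funext i
  have hsum := ((f.1 i).domRestrict (U.mod i)).finrank_range_add_finrank_ker
  rw [LinearMap.range_domRestrict, LinearMap.ker_domRestrict,
    ← Submodule.finrank_map_subtype_eq, Submodule.map_comap_subtype] at hsum
  exact congr_arg Nat.cast hsum

theorem dimVec_comap_mkQ (U : SubRep X) (W : SubRep (X.quotBy U)) :
    (comap U.mkQ W).dimVec = W.dimVec + U.dimVec := by
  rw [← dimVec_map_add_dimVec_inf_ker U.mkQ]
  congr 2
  · exact mod_injective (funext fun i =>
      Submodule.map_comap_eq_of_surjective (U.mod i).mkQ_surjective _)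
  · refine mod_injective (funext fun i => ?_)
    exact (inf_eq_right.2 (Submodule.comap_mono bot_le)).trans (Submodule.ker_mkQ _)

theorem coe_projectionOnto_map {U W : SubRep X} (h : ∀ i, IsCompl (U.mod i) (W.mod i)) (a : Q.A)
    (x : X.carrier (Q.src a)) :
    (Submodule.projectionOnto _ _ (h (Q.tgt a)) (X.map a x) : X.carrier (Q.tgt a)) =
      X.map a (Submodule.projectionOnto _ _ (h (Q.src a)) x) := by
  obtain ⟨u, w, hu, hw, rfl⟩ := Submodule.codisjoint_iff_exists_add_eq.1 (h (Q.src a)).codisjoint x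
  rw [map_add, map_add, map_add, Submodule.projectionOnto_apply_of_mem_left _ hu,
    (Submodule.projectionOnto_apply_eq_zero_iff _).2 hw,
    Submodule.projectionOnto_apply_of_mem_left _ (U.stable a u hu),
    (Submodule.projectionOnto_apply_eq_zero_iff _).2 (W.stable a w hw), add_zero, add_zero]

/-- The projection onto `U` along a complementary subrepresentation, as a morphism. -/
noncomputable def projection {U W : SubRep X} (h : IsCompl U W) : Hom X U.toRep :=
  Hom.mk (fun i => (U.mod i).projectionOnto (W.mod i) (isCompl_iff_mod.1 h i)) fun a x =>
    Subtype.ext (coe_projectionOnto_map (isCompl_iff_mod.1 h) a x)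

section Projection

variable {U W : SubRep X} (h : IsCompl U W)

theorem projection_comp_subtype : (projection h).comp U.subtype = Hom.id U.toRep :=
  Hom.ext fun i => Submodule.projectionOnto_apply_left (isCompl_iff_mod.1 h i)

theorem projection_comp_subtype_right : (projection h).comp W.subtype = 0 :=
  Hom.ext fun i => Submodule.projectionOnto_apply_right (isCompl_iff_mod.1 h i)

theorem subtype_projection_add (i : Q.V) (x : X.carrier i) :
    U.subtype.1 i ((projection h).1 i x) + W.subtype.1 i ((projection h.symm).1 i x) = x :=
  Submodule.projection_add_projection_eq_self (isCompl_iff_mod.1 h i) x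

end Projection

end SubRep

/-! ### Stability -/

namespace RepIso

variable {Q : FinQuiver} {k : Type} [Field k] {X Y : QRep Q k}

/-- The inverse isomorphism. -/
def symm (e : RepIso X Y) : RepIso Y X where
  equiv i := (e.equiv i).symm
  comm a y := by rw [LinearEquiv.symm_apply_eq, e.comm, LinearEquiv.apply_symm_apply]

/-- A vertexwise bijective morphism, as an isomorphism. -/
noncomputable def ofBijective (f : QRep.Hom X Y) (hf : ∀ i, Function.Bijective (f.1 i)) :
    RepIso X Y where
  equiv i := LinearEquiv.ofBijective (f.1 i) (hf i)
  comm := f.comm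

end RepIso

namespace QRep

open Module

variable {Q : FinQuiver} {k : Type} [Field k] {X Y : QRep Q k}

namespace Hom

variable (f : Hom X Y)

/-- The kernel of a morphism. -/
def ker : SubRep X := SubRep.comap f ⊥

/-- The image of a morphism. -/
def range : SubRep Y := SubRep.map f ⊤

variable {f}

theorem mem_range_mod {i : Q.V} {y : Y.carrier i} : y ∈ f.range.mod i ↔ ∃ x, f.1 i x = y := by
  exact ⟨fun ⟨x, _, hx⟩ => ⟨x, hx⟩, fun ⟨x, hx⟩ => ⟨x, trivial, hx⟩⟩

theorem dimVec_range_add_dimVec_ker : f.range.dimVec + f.ker.dimVec = X.dimVec := by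
  have h := SubRep.dimVec_map_add_dimVec_inf_ker f ⊤
  rwa [top_inf_eq, SubRep.dimVec_top] at h

theorem ker_eq_bot_iff : f.ker = ⊥ ↔ ∀ i, Function.Injective (f.1 i) :=
  f.ker.eq_bot_iff_mod.trans (forall_congr' fun _ => LinearMap.ker_eq_bot)

theorem range_eq_top_iff : f.range = ⊤ ↔ ∀ i, Function.Surjective (f.1 i) :=
  f.range.eq_top_iff_mod.trans <| forall_congr' fun i => by
    rw [← LinearMap.range_eq_top, LinearMap.range_eq_map]
    rfl

theorem ker_eq_top_iff : f.ker = ⊤ ↔ f = 0 := by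
  rw [f.ker.eq_top_iff_mod, Subtype.ext_iff, funext_iff]
  exact forall_congr' fun _ => LinearMap.ker_eq_top

theorem range_eq_bot_iff : f.range = ⊥ ↔ f = 0 := by
  rw [f.range.eq_bot_iff_mod, Subtype.ext_iff, funext_iff]
  exact forall_congr' fun i => (LinearMap.range_eq_map (f.1 i) ▸ LinearMap.range_eq_bot :)

end Hom

/-- Stability of a representation with respect to a weight `w` on dimension vectors, with the
convention that proper nonzero subrepresentations have negative weight. -/
def IsStable (w : (Q.V → ℤ) →+ ℤ) (X : QRep Q k) : Prop :=
  w X.dimVec = 0 ∧ ∀ U : SubRep X, U ≠ ⊥ → U ≠ ⊤ → w U.dimVec < 0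

namespace IsStable

variable {w : (Q.V → ℤ) →+ ℤ}

theorem weight_nonpos (h : IsStable w X) (U : SubRep X) : w U.dimVec ≤ 0 := by
  by_cases hbot : U = ⊥
  · rw [hbot, SubRep.dimVec_bot, map_zero]
  by_cases htop : U = ⊤
  · rw [htop, SubRep.dimVec_top, h.1]
  · exact (h.2 U hbot htop).le

theorem eq_bot_or_eq_top (h : IsStable w X) {U : SubRep X} (hU : w U.dimVec = 0) :
    U = ⊥ ∨ U = ⊤ := by
  by_contra! hne
  exact (h.2 U hne.1 hne.2).ne hU

theorem nonempty_repIso (hX : IsStable w X) (hY : IsStable w Y) {f : Hom X Y} (hf : f ≠ 0) :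
    Nonempty (RepIso X Y) := by
  have hsum : w f.range.dimVec + w f.ker.dimVec = 0 := by
    rw [← map_add, Hom.dimVec_range_add_dimVec_ker, hX.1]
  have hrange := hY.weight_nonpos f.range
  have hker := hX.weight_nonpos f.ker
  have hinj := (hX.eq_bot_or_eq_top (by linarith)).resolve_right (mt Hom.ker_eq_top_iff.1 hf)
  have hsurj := (hY.eq_bot_or_eq_top (by linarith)).resolve_left (mt Hom.range_eq_bot_iff.1 hf)
  exact ⟨.ofBijective f fun i => ⟨Hom.ker_eq_bot_iff.1 hinj i, Hom.range_eq_top_iff.1 hsurj i⟩⟩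

end IsStable

/-- Stability of a representation of the double quiver with respect to the canonical weight `λ_α`,
over an arbitrary field. -/
abbrev IsCanonicallyStable (α : Q.V → ℤ) (X : QRep Q.double k) : Prop :=
  IsStable (Q := Q.double) (Q.canonicalWeightHom α) X

end QRep

theorem lamAlphaStable_iff {Q : FinQuiver} {α : Q.V → ℤ} {X : QRep Q.double ℂ} :
    LamAlphaStable α X ↔ X.IsCanonicallyStable α where
  mp h := ⟨h.1, fun U hbot htop =>
    h.2.2 U (mt U.eq_bot_iff_mod.2 hbot) (mt U.eq_top_iff_mod.2 htop)⟩
  mpr h := ⟨h.1, h.weight_nonpos, fun U hbot htop =>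
    h.2 U (mt U.eq_bot_iff_mod.1 hbot) (mt U.eq_top_iff_mod.1 htop)⟩

/-! ### The trace pairing -/

theorem finrank_add_finrank_le_of_dual_apply_eq_zero {k L E F : Type*} [Field k]
    [AddCommGroup L] [Module k L] [FiniteDimensional k L]
    [AddCommGroup E] [Module k E] [AddCommGroup F] [Module k F]
    {φ : E →ₗ[k] L} {ψ : F →ₗ[k] Module.Dual k L} (hφ : Function.Injective φ)
    (hψ : Function.Injective ψ) (h : ∀ x y, ψ y (φ x) = 0) :
    Module.finrank k E + Module.finrank k F ≤ Module.finrank k L := by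
  have hann : LinearMap.range ψ ≤ (LinearMap.range φ).dualAnnihilator := by
    rintro _ ⟨y, rfl⟩
    rw [Submodule.mem_dualAnnihilator]
    rintro _ ⟨x, rfl⟩
    exact h x y
  have hle := Submodule.finrank_mono hann
  have hsum := Subspace.finrank_add_finrank_dualAnnihilator_eq (LinearMap.range φ)
  rw [LinearMap.finrank_range_of_inj hφ] at hsum
  rw [LinearMap.finrank_range_of_inj hψ] at hle
  omega

section TracePairing

open Module

variable {k J : Type*} [Field k] [Fintype J] {A B : J → Type*}
  [∀ j, AddCommGroup (A j)] [∀ j, Module k (A j)] [∀ j, AddCommGroup (B j)] [∀ j, Module k (B j)]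

/-- The pairing `(v, u) ↦ ∑ⱼ tr(vⱼ ∘ uⱼ)` between families of linear maps in opposite directions. -/
noncomputable def tracePairing :
    (∀ j, B j →ₗ[k] A j) →ₗ[k] Dual k (∀ j, A j →ₗ[k] B j) :=
  LinearMap.mk₂ k (fun v u => ∑ j, LinearMap.trace k (A j) (v j ∘ₗ u j))
    (fun _ _ _ => by simp [LinearMap.add_comp, Finset.sum_add_distrib])
    (fun _ _ _ => by simp [LinearMap.smul_comp, Finset.mul_sum])
    (fun _ _ _ => by simp [LinearMap.comp_add, Finset.sum_add_distrib])
    (fun _ _ _ => by simp [LinearMap.comp_smul, Finset.mul_sum])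

theorem tracePairing_apply (v : ∀ j, B j →ₗ[k] A j) (u : ∀ j, A j →ₗ[k] B j) :
    tracePairing v u = ∑ j, LinearMap.trace k (A j) (v j ∘ₗ u j) := rfl

theorem tracePairing_single [DecidableEq J] (v : ∀ j, B j →ₗ[k] A j) (j : J) (u : A j →ₗ[k] B j) :
    tracePairing v (Pi.single j u) = LinearMap.trace k (A j) (v j ∘ₗ u) := by
  rw [tracePairing_apply, Finset.sum_eq_single j, Pi.single_eq_same]
  · intro i _ hij
    rw [Pi.single_eq_of_ne hij, LinearMap.comp_zero, map_zero]
  · exact fun hj => absurd (Finset.mem_univ j) hj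

variable [∀ j, FiniteDimensional k (A j)]

theorem tracePairing_injective :
    Function.Injective (tracePairing : (∀ j, B j →ₗ[k] A j) →ₗ[k] Dual k (∀ j, A j →ₗ[k] B j)) := by
  classical
  refine LinearMap.ker_eq_bot.1 ((Submodule.eq_bot_iff _).2 fun v hv => ?_)
  ext j y
  refine (Module.forall_dual_apply_eq_zero_iff k (v j y)).1 fun φ => ?_
  have hcomp : v j ∘ₗ φ.smulRight y = φ.smulRight (v j y) :=
    LinearMap.ext fun x => map_smul (v j) (φ x) y
  rw [← LinearMap.trace_smulRight, ← hcomp, ← tracePairing_single, LinearMap.mem_ker.1 hv,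
    LinearMap.zero_apply]

variable [∀ j, FiniteDimensional k (B j)]

theorem tracePairing_bijective :
    Function.Bijective
      (tracePairing : (∀ j, B j →ₗ[k] A j) →ₗ[k] Dual k (∀ j, A j →ₗ[k] B j)) := by
  refine ⟨tracePairing_injective, ?_⟩
  refine (LinearMap.injective_iff_surjective_of_finrank_eq_finrank ?_).1 tracePairing_injective
  rw [Subspace.dual_finrank_eq, finrank_pi_fintype, finrank_pi_fintype]
  simp only [finrank_linearMap, mul_comm]

theorem exists_tracePairing_eq_zero {L : Submodule k (∀ j, A j →ₗ[k] B j)} (hL : L ≠ ⊤) :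
    ∃ v : ∀ j, B j →ₗ[k] A j, v ≠ 0 ∧ ∀ u ∈ L, tracePairing v u = 0 := by
  obtain ⟨φ, hφ, hLφ⟩ := Submodule.exists_le_ker_of_lt_top L hL.lt_top
  obtain ⟨v, rfl⟩ := tracePairing_bijective.2 φ
  exact ⟨v, fun hv => hφ (by rw [hv, map_zero]), fun u hu => hLφ hu⟩

end TracePairing

/-! ### Morphisms between representations of the preprojective algebra -/

section Preprojective

open Module QRep

theorem trace_pi_comp_single_comp_proj {k ι : Type*} [Field k] [Finite ι] [DecidableEq ι]
    {V : ι → Type*} [∀ i, AddCommGroup (V i)] [∀ i, Module k (V i)]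
    [∀ i, FiniteDimensional k (V i)] (h : ∀ i, V i →ₗ[k] V i) (j : ι) (t : V j →ₗ[k] V j) :
    LinearMap.trace k (∀ i, V i) (LinearMap.pi (fun i => h i ∘ₗ LinearMap.proj i) ∘ₗ
      LinearMap.single k V j ∘ₗ t ∘ₗ LinearMap.proj j) = LinearMap.trace k (V j) (h j ∘ₗ t) := by
  rw [← LinearMap.comp_assoc, ← LinearMap.comp_assoc, LinearMap.trace_comp_comm']
  congr 1
  ext x
  simp

/-- The part of the pairing of two Hom complexes over the double quiver contributed by an arrow `a`
and its reverse: only terms matching the preprojective relation at the two ends survive. -/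
theorem trace_arrow_pairing {k V W V' W' : Type*} [Field k]
    [AddCommGroup V] [Module k V] [FiniteDimensional k V]
    [AddCommGroup W] [Module k W] [FiniteDimensional k W]
    [AddCommGroup V'] [Module k V'] [FiniteDimensional k V']
    [AddCommGroup W'] [Module k W'] [FiniteDimensional k W']
    (x : V →ₗ[k] W) (x' : W →ₗ[k] V) (y : V' →ₗ[k] W') (y' : W' →ₗ[k] V')
    (f : V →ₗ[k] V') (f' : W →ₗ[k] W') (g : V' →ₗ[k] V) (g' : W' →ₗ[k] W) :
    LinearMap.trace k V ((x' ∘ₗ g' - g ∘ₗ y') ∘ₗ (y ∘ₗ f - f' ∘ₗ x)) -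
        LinearMap.trace k W ((x ∘ₗ g - g' ∘ₗ y) ∘ₗ (y' ∘ₗ f' - f ∘ₗ x')) =
      (LinearMap.trace k W' ((f' ∘ₗ g') ∘ₗ y ∘ₗ y') - LinearMap.trace k V' ((f ∘ₗ g) ∘ₗ y' ∘ₗ y)) -
        (LinearMap.trace k W ((g' ∘ₗ f') ∘ₗ x ∘ₗ x') -
          LinearMap.trace k V ((g ∘ₗ f) ∘ₗ x' ∘ₗ x)) := by
  have h₁ := LinearMap.trace_comp_comm' (R := k) x' (g' ∘ₗ y ∘ₗ f)
  have h₂ := LinearMap.trace_comp_comm' (R := k) x' (g' ∘ₗ f' ∘ₗ x)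
  have h₃ := LinearMap.trace_comp_comm' (R := k) (g ∘ₗ y' ∘ₗ y) f
  have h₄ := LinearMap.trace_comp_comm' (R := k) (g ∘ₗ y' ∘ₗ f') x
  have h₅ := LinearMap.trace_comp_comm' (R := k) (g' ∘ₗ y ∘ₗ y') f'
  have h₆ := LinearMap.trace_comp_comm' (R := k) (g ∘ₗ f ∘ₗ x') x
  simp only [LinearMap.sub_comp, LinearMap.comp_sub, map_sub, LinearMap.comp_assoc]
    at h₁ h₂ h₃ h₄ h₅ h₆ ⊢
  linear_combination -h₁ + h₂ + h₃ - h₄ - h₅ + h₆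

variable {Q : FinQuiver} {k : Type} [Field k] {X Y : QRep Q.double k}

theorem PreprojRel.sum_trace_comp (hX : PreprojRel Q X) (h : VertexMaps X X) :
    ∑ a : Q.A, LinearMap.trace k (X.carrier (Q.double.tgt (Sum.inl a)))
        (h (Q.double.tgt (Sum.inl a)) ∘ₗ X.map (Sum.inl a) ∘ₗ X.map (Sum.inr a)) =
      ∑ a : Q.A, LinearMap.trace k (X.carrier (Q.double.src (Sum.inl a)))
        (h (Q.double.src (Sum.inl a)) ∘ₗ X.map (Sum.inr a) ∘ₗ X.map (Sum.inl a)) := by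
  let H : (∀ i, X.carrier i) →ₗ[k] ∀ i, X.carrier i :=
    LinearMap.pi fun i => h i ∘ₗ LinearMap.proj i
  have hcomp (i j : Q.double.V) (p : X.carrier i →ₗ[k] X.carrier j)
      (q : X.carrier j →ₗ[k] X.carrier i) :
      LinearMap.trace k (∀ i, X.carrier i)
        (H ∘ₗ (LinearMap.single k X.carrier j ∘ₗ p ∘ₗ LinearMap.proj i) ∘ₗ
          LinearMap.single k X.carrier i ∘ₗ q ∘ₗ LinearMap.proj j) =
      LinearMap.trace k (X.carrier j) (h j ∘ₗ p ∘ₗ q) := by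
    rw [← trace_pi_comp_single_comp_proj h]
    congr 2
    ext x
    simp
  have hrel := congr_arg (fun T => LinearMap.trace k (∀ i, X.carrier i) (H ∘ₗ T)) hX
  simp only [← Module.End.mul_eq_comp, Finset.mul_sum, map_sum] at hrel
  exact (Finset.sum_congr rfl fun a _ => (hcomp _ _ _ _).symm).trans
    (hrel.trans (Finset.sum_congr rfl fun a _ => hcomp _ _ _ _))

namespace QRep

/-- The degree-one term of the complex from `Y` to `X` as a family dual to the one from `X` to `Y`:
the components at `a` and at the reverse arrow `a*` are exchanged, one of them with a sign. -/
def swapArrowMaps (X Y : QRep Q.double k) : ArrowMaps Y X →ₗ[k]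
    ∀ b : Q.double.A, Y.carrier (Q.double.tgt b) →ₗ[k] X.carrier (Q.double.src b) where
  toFun w b := match b with
    | Sum.inl a => w (Sum.inr a)
    | Sum.inr a => -w (Sum.inl a)
  map_add' w w' := funext fun b => match b with
    | Sum.inl _ => rfl
    | Sum.inr a => neg_add (w (Sum.inl a)) (w' (Sum.inl a))
  map_smul' c w := funext fun b => match b with
    | Sum.inl _ => rfl
    | Sum.inr a => (smul_neg c (w (Sum.inl a))).symm

theorem swapArrowMaps_injective : Function.Injective (swapArrowMaps X Y) := by
  refine fun w w' h => funext fun b => ?_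
  match b with
  | Sum.inl a => exact neg_injective (congr_fun h (Sum.inr a))
  | Sum.inr a => exact congr_fun h (Sum.inl a)

theorem tracePairing_homDiff_homDiff (hX : PreprojRel Q X) (hY : PreprojRel Q Y)
    (g : VertexMaps Y X) (f : VertexMaps X Y) :
    tracePairing (swapArrowMaps X Y (homDiff Y X g)) (homDiff X Y f) = 0 := by
  have hpair (a : Q.A) := trace_arrow_pairing (X.map (Sum.inl a)) (X.map (Sum.inr a))
    (Y.map (Sum.inl a)) (Y.map (Sum.inr a)) (f (Q.double.src (Sum.inl a)))
    (f (Q.double.tgt (Sum.inl a))) (g (Q.double.src (Sum.inl a))) (g (Q.double.tgt (Sum.inl a)))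
  have hfg := hY.sum_trace_comp fun i => f i ∘ₗ g i
  have hgf := hX.sum_trace_comp fun i => g i ∘ₗ f i
  refine (Fintype.sum_sum_type _).trans ?_
  rw [← Finset.sum_add_distrib]
  refine (Finset.sum_congr rfl fun a _ => Eq.trans ?_ (hpair a)).trans ?_
  · rw [sub_eq_add_neg, ← map_neg, ← LinearMap.neg_comp]
    rfl
  · simp only [Finset.sum_sub_distrib]
    exact sub_eq_zero.2 ((sub_eq_zero.2 hfg).trans (sub_eq_zero.2 hgf).symm)

theorem eulerForm_add_le_finrank_hom_add (hX : PreprojRel Q X) (hY : PreprojRel Q Y) :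
    Q.eulerForm X.dimVec Y.dimVec + Q.eulerForm Y.dimVec X.dimVec ≤
      finrank k (Hom X Y) + finrank k (Hom Y X) := by
  have hle : finrank k (LinearMap.range (homDiff X Y)) +
      finrank k (LinearMap.range (homDiff Y X)) ≤ finrank k (ArrowMaps X Y) := by
    refine finrank_add_finrank_le_of_dual_apply_eq_zero
      (φ := (LinearMap.range (homDiff X Y)).subtype)
      (ψ := tracePairing ∘ₗ swapArrowMaps X Y ∘ₗ (LinearMap.range (homDiff Y X)).subtype)
      (Submodule.subtype_injective _) (tracePairing_injective.comp
        (swapArrowMaps_injective.comp (Submodule.subtype_injective _))) ?_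
    rintro ⟨_, f, rfl⟩ ⟨_, g, rfl⟩
    exact tracePairing_homDiff_homDiff hX hY g f
  have hXY := finrank_range_homDiff_add X Y
  have hYX := finrank_range_homDiff_add Y X
  have hvertices : ∑ i : Q.double.V, X.dimVec i * Y.dimVec i = finrank k (VertexMaps Y X) := by
    simp only [dimVec, finrank_pi_fintype, finrank_linearMap, Nat.cast_sum, Nat.cast_mul, mul_comm]
  refine ((Q.eulerForm_add_eulerForm_swap X.dimVec Y.dimVec).trans
    (congr_arg₂ (· + ·) (eulerForm_dimVec X Y) hvertices)).trans_le ?_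
  omega

theorem IsStable.nonempty_repIso_of_eulerForm_pos {w : (Q.double.V → ℤ) →+ ℤ}
    (hXrel : PreprojRel Q X) (hYrel : PreprojRel Q Y) (hX : IsStable w X) (hY : IsStable w Y)
    (h : 0 < Q.eulerForm X.dimVec Y.dimVec + Q.eulerForm Y.dimVec X.dimVec) :
    Nonempty (RepIso X Y) := by
  by_cases hXY : ∃ f : Hom X Y, f ≠ 0
  · exact hX.nonempty_repIso hY hXY.choose_spec
  by_cases hYX : ∃ g : Hom Y X, g ≠ 0
  · exact (hY.nonempty_repIso hX hYX.choose_spec).map RepIso.symm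
  push Not at hXY hYX
  have : Subsingleton (Hom X Y) := ⟨fun f g => (hXY f).trans (hXY g).symm⟩
  have : Subsingleton (Hom Y X) := ⟨fun f g => (hYX f).trans (hYX g).symm⟩
  have hle := eulerForm_add_le_finrank_hom_add hXrel hYrel
  rw [finrank_zero_of_subsingleton, finrank_zero_of_subsingleton, Nat.cast_zero, add_zero] at hle
  exact absurd h hle.not_gt

end QRep

end Preprojective

/-! ### Bricks -/

namespace QRep

open Module

variable {Q : FinQuiver} {k : Type} [Field k] {P : QRep Q k}

/-- A brick: a representation whose only endomorphisms are the scalars. -/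
def IsBrick (P : QRep Q k) : Prop := finrank k (Hom P P) = 1

namespace IsBrick

theorem exists_smul_id_eq (hP : IsBrick P) (f : Hom P P) : ∃ c : k, c • Hom.id P = f := by
  refine (finrank_eq_one_iff_of_nonzero' (Hom.id P) fun hid => ?_).1 hP f
  have hzero (g : Hom P P) : g = 0 :=
    Hom.ext fun i x => (DFunLike.congr_arg (g.1 i) (DFunLike.congr_fun
      (congr_fun (congr_arg Subtype.val hid) i) x)).trans (map_zero (g.1 i))
  have : Subsingleton (Hom P P) := ⟨fun g g' => (hzero g).trans (hzero g').symm⟩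
  exact one_ne_zero (hP.symm.trans finrank_zero_of_subsingleton)

theorem surjective_of_ne_zero (hP : IsBrick P) {f : Hom P P} (hf : f ≠ 0) (i : Q.V) :
    Function.Surjective (f.1 i) := by
  obtain ⟨c, rfl⟩ := hP.exists_smul_id_eq f
  have hc : c ≠ 0 := fun hc => hf (by rw [hc, zero_smul])
  exact fun x => ⟨c⁻¹ • x, smul_inv_smul₀ hc x⟩

theorem eulerForm_dimVec_nonpos (hP : IsBrick P) {U : SubRep P} (hU : U ≠ ⊤) :
    Q.eulerForm P.dimVec U.dimVec ≤ 0 := by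
  refine eulerForm_nonpos (Y := U.toRep) fun g => ?_
  have hcomp : U.subtype.comp g = 0 := by
    by_contra hne
    refine hU (U.eq_top_iff_mod.2 fun i => eq_top_iff.2 fun x _ => ?_)
    obtain ⟨y, rfl⟩ := hP.surjective_of_ne_zero hne i x
    exact (g.1 i y).2
  exact Hom.ext fun i x => Subtype.ext (Hom.apply_eq_of_comp_eq hcomp i x)

theorem extVanishes (hP : IsBrick P) (hq : Q.titsForm P.dimVec = 1) : ExtVanishes P P := by
  rw [extVanishes_iff, hP, Nat.cast_one]
  exact hq

theorem eulerForm_dimVec_pos (hP : IsBrick P) (hq : Q.titsForm P.dimVec = 1) {U : SubRep P}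
    (hU : U ≠ ⊥) : 0 < Q.eulerForm U.dimVec P.dimVec := by
  have hext := (hP.extVanishes hq).of_injective (ι := U.subtype) U.shortExact.injective
  refine (Nat.cast_pos.2 ?_).trans_eq (extVanishes_iff.1 hext).symm
  have hne : U.subtype ≠ 0 := by
    refine fun hzero => hU (U.eq_bot_iff_mod.2 fun i => (Submodule.eq_bot_iff _).2 fun x hx => ?_)
    change U.subtype.1 i ⟨x, hx⟩ = 0
    rw [hzero]
    rfl
  have : Nontrivial (Hom U.toRep P) := ⟨⟨_, _, hne⟩⟩
  exact finrank_pos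

theorem isCanonicallyStable_extendZero (hP : IsBrick P) (hq : Q.titsForm P.dimVec = 1) :
    (extendZero P).IsCanonicallyStable P.dimVec := by
  have hneg (U : SubRep P) (hbot : U ≠ ⊥) (htop : U ≠ ⊤) :
      canonicalWeight Q P.dimVec U.dimVec < 0 :=
    sub_neg.2 ((hP.eulerForm_dimVec_nonpos htop).trans_lt (hP.eulerForm_dimVec_pos hq hbot))
  refine ⟨sub_self (Q.titsForm P.dimVec), fun U hbot htop => ?_⟩
  exact hneg ⟨U.mod, fun a => U.stable (Sum.inl a)⟩
    (fun h => hbot (U.eq_bot_iff_mod.2 (congr_fun (congr_arg SubRep.mod h))))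
    (fun h => htop (U.eq_top_iff_mod.2 (congr_fun (congr_arg SubRep.mod h))))

end IsBrick

theorem arrowEnd_eq_zero {X : QRep Q.double k} {b : Q.double.A} (h : X.map b = 0) :
    arrowEnd X b = 0 :=
  (congr_arg (fun t => LinearMap.single k X.carrier (Q.double.tgt b) ∘ₗ t ∘ₗ
    LinearMap.proj (Q.double.src b)) h).trans (by rw [LinearMap.zero_comp, LinearMap.comp_zero])

theorem preprojRel_extendZero (P : QRep Q k) : PreprojRel Q (extendZero P) :=
  Finset.sum_congr rfl fun a _ => by
    rw [arrowEnd_eq_zero (X := extendZero P) (b := Sum.inr a) rfl, LinearMap.comp_zero,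
      LinearMap.zero_comp]

end QRep

/-! ### A numerical criterion for the vanishing of Ext -/

namespace QRep

open Module

variable {Q : FinQuiver} {k : Type} [Field k]

section TraceOrthogonal

variable {X Y : QRep Q k} {v : ∀ a, X.carrier (Q.tgt a) →ₗ[k] Y.carrier (Q.src a)}

/-- The space `∏ₐ Hom(D_{s(a)}, X_{t(a)}) × ∏ₐ Hom(D_{t(a)}, Y_{s(a)})` of maps out of a graded
vector space `D`, along the arrows into `X` and against the arrows into `Y`. -/
abbrev GradedArrowMaps (D : Q.V → Type) [∀ i, AddCommGroup (D i)] [∀ i, Module k (D i)]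
    (X Y : QRep Q k) : Type :=
  (∀ a, D (Q.src a) →ₗ[k] X.carrier (Q.tgt a)) × (∀ a, D (Q.tgt a) →ₗ[k] Y.carrier (Q.src a))

variable {D : Q.V → Type} [∀ i, AddCommGroup (D i)] [∀ i, Module k (D i)]

/-- Composition of `f ∈ ∏ᵢ Hom(Dᵢ, Xᵢ)` with the arrows of `X` and with `v`. -/
def postcompArrows (D : Q.V → Type) [∀ i, AddCommGroup (D i)] [∀ i, Module k (D i)]
    (v : ∀ a, X.carrier (Q.tgt a) →ₗ[k] Y.carrier (Q.src a)) :
    (∀ i, D i →ₗ[k] X.carrier i) →ₗ[k] GradedArrowMaps D X Y :=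
  (LinearMap.pi fun a => LinearMap.llcomp k _ _ _ (X.map a) ∘ₗ LinearMap.proj (Q.src a)).prod
    (LinearMap.pi fun a => LinearMap.llcomp k _ _ _ (v a) ∘ₗ LinearMap.proj (Q.tgt a))

/-- Composition of `v` and of the arrows of `Y` with `h ∈ ∏ᵢ Hom(Yᵢ, Dᵢ)`, as a functional via the
trace pairing. -/
noncomputable def precompArrows
    (v : ∀ a, X.carrier (Q.tgt a) →ₗ[k] Y.carrier (Q.src a)) :
    (∀ i, Y.carrier i →ₗ[k] D i) →ₗ[k] Dual k (GradedArrowMaps D X Y) :=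
  (dualProdDualEquivDual k _ _).toLinearMap ∘ₗ
    (-(tracePairing ∘ₗ
      LinearMap.pi fun a => LinearMap.lcomp k (D (Q.src a)) (v a) ∘ₗ LinearMap.proj (Q.src a))).prod
    (tracePairing ∘ₗ
      LinearMap.pi fun a => LinearMap.lcomp k (D (Q.tgt a)) (Y.map a) ∘ₗ LinearMap.proj (Q.tgt a))

theorem postcompArrows_injective
    (hX : ∀ U : SubRep X, (∀ a, U.mod (Q.tgt a) ≤ LinearMap.ker (v a)) → U = ⊥) :
    Function.Injective (postcompArrows D v) := by
  refine (injective_iff_map_eq_zero _).2 fun f hf => ?_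
  have hXf (a) (x : D (Q.src a)) : X.map a (f _ x) = 0 :=
    DFunLike.congr_fun (congr_fun (congr_arg Prod.fst hf) a) x
  have hvf (a) (x : D (Q.tgt a)) : v a (f _ x) = 0 :=
    DFunLike.congr_fun (congr_fun (congr_arg Prod.snd hf) a) x
  let U : SubRep X :=
    { mod := fun i => LinearMap.range (f i)
      stable := by
        rintro a _ ⟨x, rfl⟩
        rw [hXf]
        exact Submodule.zero_mem _ }
  have hU : U = ⊥ := hX U fun a => LinearMap.range_le_ker_iff.2 (LinearMap.ext (hvf a))
  exact funext fun i => LinearMap.range_eq_bot.1 (U.eq_bot_iff_mod.1 hU i)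

theorem precompArrows_injective [∀ i, FiniteDimensional k (D i)]
    (hY : ∀ U : SubRep Y, (∀ a, LinearMap.range (v a) ≤ U.mod (Q.src a)) → U = ⊤) :
    Function.Injective (precompArrows (D := D) v) := by
  refine (injective_iff_map_eq_zero _).2 fun h hh => ?_
  obtain ⟨hsrc, htgt⟩ := Prod.ext_iff.1 ((dualProdDualEquivDual k _ _).map_eq_zero_iff.1 hh)
  have hhv (a) (x : X.carrier (Q.tgt a)) : h _ (v a x) = 0 :=
    DFunLike.congr_fun (congr_fun ((map_eq_zero_iff _ tracePairing_injective).1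
      (neg_eq_zero.1 hsrc)) a) x
  have hhY (a) (y : Y.carrier (Q.src a)) : h _ (Y.map a y) = 0 :=
    DFunLike.congr_fun (congr_fun ((map_eq_zero_iff _ tracePairing_injective).1 htgt) a) y
  let U : SubRep Y :=
    { mod := fun i => LinearMap.ker (h i)
      stable := fun a y _ => hhY a y }
  have hU : U = ⊤ := hY U fun a => LinearMap.range_le_ker_iff.2 (LinearMap.ext (hhv a))
  exact funext fun i => LinearMap.ker_eq_top.1 (U.eq_top_iff_mod.1 hU i)

theorem precompArrows_postcompArrows [∀ i, FiniteDimensional k (D i)]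
    (hv : ∀ g, tracePairing v (homDiff Y X g) = 0)
    (h : ∀ i, Y.carrier i →ₗ[k] D i) (f : ∀ i, D i →ₗ[k] X.carrier i) :
    precompArrows v h (postcompArrows D v f) = 0 := by
  have hpair : precompArrows v h (postcompArrows D v f) =
      -tracePairing v (homDiff Y X fun i => f i ∘ₗ h i) := by
    change -(∑ a, LinearMap.trace k _ ((h _ ∘ₗ v a) ∘ₗ X.map a ∘ₗ f _)) +
      ∑ a, LinearMap.trace k _ ((h _ ∘ₗ Y.map a) ∘ₗ v a ∘ₗ f _) = -∑ a, LinearMap.trace k _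
        (v a ∘ₗ (X.map a ∘ₗ f _ ∘ₗ h _ - (f _ ∘ₗ h _) ∘ₗ Y.map a))
    simp only [LinearMap.comp_sub, map_sub, Finset.sum_sub_distrib]
    rw [neg_sub, neg_add_eq_sub]
    congr 1 <;> refine Finset.sum_congr rfl fun a _ => ?_
    · exact LinearMap.trace_comp_comm' (v a ∘ₗ f _) (h _ ∘ₗ Y.map a)
    · exact LinearMap.trace_comp_comm' (v a ∘ₗ X.map a ∘ₗ f _) (h _)
  rw [hpair, hv, neg_zero]

theorem eulerForm_add_eulerForm_nonpos {d : Q.V → ℤ} (hd : 0 ≤ d)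
    (hv : ∀ g, tracePairing v (homDiff Y X g) = 0)
    (hX : ∀ U : SubRep X, (∀ a, U.mod (Q.tgt a) ≤ LinearMap.ker (v a)) → U = ⊥)
    (hY : ∀ U : SubRep Y, (∀ a, LinearMap.range (v a) ≤ U.mod (Q.src a)) → U = ⊤) :
    Q.eulerForm d X.dimVec + Q.eulerForm Y.dimVec d ≤ 0 := by
  lift d to Q.V → ℕ using hd
  have hle := finrank_add_finrank_le_of_dual_apply_eq_zero
    (postcompArrows_injective (D := fun i => Fin (d i) → k) hX) (precompArrows_injective hY)
    fun f h => precompArrows_postcompArrows hv h f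
  simp only [finrank_prod, finrank_pi_fintype, finrank_linearMap, finrank_self,
    Finset.sum_const, Finset.card_univ, Fintype.card_fin, smul_eq_mul, mul_one] at hle
  simp only [FinQuiver.eulerForm, dimVec]
  zify at hle
  simp only [mul_comm (d _ : ℤ)] at hle ⊢
  linarith

end TraceOrthogonal

section Transfer

variable {F F' T T' : QRep Q k}

theorem comp_homDiff_comp (ι : Hom F' F) (π : Hom T T') (g : VertexMaps F T) (a : Q.A) :
    π.1 _ ∘ₗ homDiff F T g a ∘ₗ ι.1 _ =
      homDiff F' T' (fun i => π.1 i ∘ₗ g i ∘ₗ ι.1 i) a := by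
  refine LinearMap.ext fun x => (map_sub _ _ _).trans (congr_arg₂ _ (π.comm a _) ?_)
  exact congr_arg (fun y => π.1 _ (g _ y)) (ι.comm a x).symm

theorem tracePairing_homDiff_eq_zero_of_factor {ι : Hom F' F} {π : Hom T T'}
    (hι : ∀ i, Function.Injective (ι.1 i)) (hπ : ∀ i, Function.Surjective (π.1 i))
    (v : ∀ a, T'.carrier (Q.tgt a) →ₗ[k] F'.carrier (Q.src a))
    (hv : ∀ g, tracePairing (fun a => ι.1 _ ∘ₗ v a ∘ₗ π.1 _) (homDiff F T g) = 0)
    (g : VertexMaps F' T') : tracePairing v (homDiff F' T' g) = 0 := by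
  choose ρ hρ using fun i =>
    (ι.1 i).exists_leftInverse_of_injective (LinearMap.ker_eq_bot.2 (hι i))
  choose σ hσ using fun i =>
    (π.1 i).exists_rightInverse_of_surjective (LinearMap.range_eq_top.2 (hπ i))
  let g' : VertexMaps F T := fun i => σ i ∘ₗ g i ∘ₗ ρ i
  have hlift : (fun i => π.1 i ∘ₗ g' i ∘ₗ ι.1 i) = g := funext fun i => by
    change π.1 i ∘ₗ (σ i ∘ₗ g i ∘ₗ ρ i) ∘ₗ ι.1 i = g i
    rw [LinearMap.comp_assoc, LinearMap.comp_assoc, hρ, ← LinearMap.comp_assoc, hσ,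
      LinearMap.id_comp, LinearMap.comp_id]
  rw [← hv g', tracePairing_apply, tracePairing_apply]
  refine Finset.sum_congr rfl fun a _ => ?_
  rw [← congr_fun (congr_arg (homDiff F' T') hlift) a, ← comp_homDiff_comp]
  exact LinearMap.trace_comp_comm' (ι.1 _) (v a ∘ₗ π.1 _ ∘ₗ homDiff F T g' a)

end Transfer

/-- A functional on `∏ₐ Hom(F_{s(a)}, T_{t(a)})` that kills the image of the differential and
detects a nonzero class of `Ext(F, T)` lives on a subrepresentation `F'` of `F` and on a quotient
`T/T'`, the smallest ones through which it factors. -/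
theorem extVanishes_of_forall_subRep {F T : QRep Q k} {d : Q.V → ℤ} (hd : 0 ≤ d)
    (h : ∀ (F' : SubRep F) (T' : SubRep T), F' ≠ ⊥ → T' ≠ ⊤ →
      0 < Q.eulerForm d (T.quotBy T').dimVec + Q.eulerForm F'.dimVec d) : ExtVanishes F T := by
  by_contra hext
  obtain ⟨v, hv0, hv⟩ := exists_tracePairing_eq_zero (mt LinearMap.range_eq_top.1 hext)
  obtain ⟨T', hker, hT'⟩ := SubRep.exists_isGreatest Q.tgt fun a => LinearMap.ker (v a)
  obtain ⟨F', hrange, hF'⟩ := SubRep.exists_isLeast Q.src fun a => LinearMap.range (v a)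
  have hvF (a) (x : T.carrier (Q.tgt a)) : v a x ∈ F'.mod (Q.src a) :=
    hrange a (LinearMap.mem_range_self _ x)
  let u (a) : (T.quotBy T').carrier (Q.tgt a) →ₗ[k] F'.toRep.carrier (Q.src a) :=
    (T'.mod (Q.tgt a)).liftQ ((v a).codRestrict _ (hvF a))
      ((hker a).trans_eq (LinearMap.ker_codRestrict _ _ _).symm)
  refine (h F' T' ?_ ?_).not_ge (eulerForm_add_eulerForm_nonpos (v := u) hd ?_ ?_ ?_)
  · rintro rfl
    exact hv0 (funext fun a => LinearMap.ext fun x => hvF a x)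
  · rintro rfl
    exact hv0 (funext fun a => LinearMap.ext fun x => hker a (Submodule.mem_top (x := x)))
  · exact tracePairing_homDiff_eq_zero_of_factor F'.shortExact.injective T'.shortExact.surjective u
      fun g => hv _ (LinearMap.mem_range_self _ g)
  · intro U hU
    have hle : SubRep.comap T'.mkQ U ≤ T' := hT' fun a x hx =>
      congr_arg Subtype.val (show u a (T'.mkQ.1 _ x) = 0 from hU a hx)
    refine U.eq_bot_iff_mod.2 fun i => (Submodule.eq_bot_iff _).2 fun y hy => ?_
    obtain ⟨x, rfl⟩ := T'.shortExact.surjective i y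
    exact (Submodule.Quotient.mk_eq_zero _).2 (hle i hy)
  · intro U hU
    have hle : F' ≤ SubRep.map F'.subtype U := hF' fun a => by
      rintro _ ⟨x, rfl⟩
      exact ⟨u a (T'.mkQ.1 _ x), hU a ⟨_, rfl⟩, rfl⟩
    refine U.eq_top_iff_mod.2 fun i => eq_top_iff.2 fun y _ => ?_
    obtain ⟨y', hy', hyy'⟩ := hle i y.2
    rwa [← Subtype.ext hyy']

end QRep

/-! ### Defects of subrepresentations -/

namespace SubRep

open QRep

variable {Q : FinQuiver} {k : Type} [Field k] {X : QRep Q k}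

theorem mod_strictMono : StrictMono (mod : SubRep X → _) :=
  Monotone.strictMono_of_injective (fun _ _ h => h) mod_injective

instance : WellFoundedLT (SubRep X) := mod_strictMono.wellFoundedLT

instance : WellFoundedGT (SubRep X) :=
  StrictAnti.wellFoundedGT (f := fun (U : SubRep X) i => OrderDual.toDual (U.mod i))
    fun _ _ h => mod_strictMono h

theorem exists_forall_le {β : Type*} [LinearOrder β] (f : (Q.V → ℤ) → β) :
    ∃ U : SubRep X, ∀ W : SubRep X, f W.dimVec ≤ f U.dimVec := by
  have hfin : (Set.range (dimVec : SubRep X → _)).Finite :=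
    (Set.finite_Icc 0 X.dimVec).subset <| by
      rintro _ ⟨U, rfl⟩
      exact ⟨U.dimVec_nonneg, dimVec_top (X := X) ▸ dimVec_mono le_top⟩
  obtain ⟨_, ⟨U, rfl⟩, hU⟩ := Set.exists_max_image _ f hfin ⟨_, ⊥, rfl⟩
  exact ⟨U, fun W => hU _ ⟨W, rfl⟩⟩

theorem isCompl_of_disjoint {U W : SubRep X} (h : Disjoint U W)
    (hdim : U.dimVec + W.dimVec = X.dimVec) : IsCompl U W :=
  isCompl_iff_mod.2 fun i =>
    (Submodule.isCompl_iff_disjoint _ _ (Nat.cast_le.1 (congr_fun hdim i).ge)).2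
      (disjoint_iff.2 ((U ⊓ W).eq_bot_iff_mod.1 (disjoint_iff.1 h) i))

theorem ker_mkQ (U : SubRep X) : U.mkQ.ker = U :=
  mod_injective (funext fun i => (U.mod i).ker_mkQ)

theorem range_subtype (U : SubRep X) : U.subtype.range = U :=
  mod_injective (funext fun i => (LinearMap.range_eq_map _).symm.trans (U.mod i).range_subtype)

theorem lt_comap_mkQ {U : SubRep X} {W : SubRep (X.quotBy U)} (hW : W ≠ ⊥) :
    U < comap U.mkQ W := by
  have hle : U ≤ comap U.mkQ W := fun i =>
    (U.mod i).ker_mkQ.ge.trans (Submodule.comap_mono (bot_le (a := W.mod i)))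
  refine hle.lt_of_ne fun heq => hW (dimVec_eq_zero ?_)
  exact add_eq_right.1 ((dimVec_comap_mkQ U W).symm.trans (congr_arg dimVec heq.symm))

theorem map_subtype_lt {U : SubRep X} {W : SubRep U.toRep} (hW : W ≠ ⊤) : map U.subtype W < U := by
  have hle : map U.subtype W ≤ U := fun i => Submodule.map_subtype_le (U.mod i) (W.mod i)
  refine hle.lt_of_ne fun heq => hW (eq_top_of_dimVec_eq ?_)
  exact (dimVec_map_of_injective U.shortExact.injective W).symm.trans (congr_arg dimVec heq)

end SubRep

namespace QRep

section Indecomposable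

variable {Q : FinQuiver} {k : Type} [Field k] {P L : QRep Q k}

theorem Hom.isCompl_range_ker {s : Hom L P} {r : Hom P L} (h : r.comp s = Hom.id L) :
    IsCompl s.range r.ker := by
  have hrs (i) (y : L.carrier i) : r.1 i (s.1 i y) = y := Hom.apply_eq_of_comp_eq h i y
  refine SubRep.isCompl_iff_mod.2 fun i => ⟨?_, ?_⟩
  · refine Submodule.disjoint_def.2 ?_
    rintro _ ⟨y, -, rfl⟩ hy
    rw [← hrs i y, LinearMap.mem_ker.1 hy, map_zero]
  · refine Submodule.codisjoint_iff_exists_add_eq.2 fun x =>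
      ⟨s.1 i (r.1 i x), x - s.1 i (r.1 i x), Hom.mem_range_mod.2 ⟨_, rfl⟩, ?_, by abel⟩
    exact LinearMap.sub_mem_ker_iff.2 (hrs i _).symm

theorem indecomposable_iff : P.Indecomposable ↔ (⊥ : SubRep P) ≠ ⊤ ∧
    ∀ U W : SubRep P, IsCompl U W → U = ⊥ ∨ W = ⊥ := by
  refine and_congr ?_ (forall₂_congr fun U W => ?_)
  · rw [Ne, SubRep.eq_top_iff_mod, not_forall]
    refine exists_congr fun i => ?_
    change 0 < Module.finrank k (P.carrier i) ↔ ¬(⊥ : Submodule k (P.carrier i)) = ⊤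
    rw [Module.finrank_pos_iff, ← Submodule.nontrivial_iff k]
    exact ⟨fun _ => _root_.bot_ne_top, fun h => ⟨⟨_, _, h⟩⟩⟩
  · rw [SubRep.isCompl_iff_mod, SubRep.eq_bot_iff_mod, SubRep.eq_bot_iff_mod]

namespace Indecomposable

theorem bot_ne_top (hP : P.Indecomposable) : (⊥ : SubRep P) ≠ ⊤ := (indecomposable_iff.1 hP).1

theorem eq_bot_or_eq_top (hP : P.Indecomposable) {U W : SubRep P} (h : IsCompl U W) :
    U = ⊥ ∨ U = ⊤ :=
  ((indecomposable_iff.1 hP).2 U W h).imp_right fun hW : W = ⊥ => eq_top_of_isCompl_bot (hW ▸ h)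

theorem eq_bot_or_eq_top_of_extVanishes (hP : P.Indecomposable) {U : SubRep P}
    (h : ExtVanishes (P.quotBy U) U.toRep) : U = ⊥ ∨ U = ⊤ := by
  obtain ⟨r, hr⟩ := U.shortExact.exists_extension h (Hom.id U.toRep)
  exact hP.eq_bot_or_eq_top (U.range_subtype ▸ Hom.isCompl_range_ker hr)

end Indecomposable

end Indecomposable

section Defect

variable {Q : AffineQuiver} {k : Type} [Field k] {P F T : QRep Q.toFinQuiver k}

theorem extVanishes_of_defect_lt
    (h : ∀ (F' : SubRep F) (T' : SubRep T), F' ≠ ⊥ → T' ≠ ⊤ →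
      Q.defect F'.dimVec < Q.defect (T.quotBy T').dimVec) : ExtVanishes F T := by
  refine extVanishes_of_forall_subRep (d := Q.δ) (fun i => (Q.delta_pos i).le)
    fun F' T' hF' hT' => ?_
  rw [Q.eulerForm_delta_right]
  exact sub_pos.2 (h F' T' hF' hT')

theorem defect_bot : Q.defect (⊥ : SubRep P).dimVec = 0 := by
  rw [SubRep.dimVec_bot, ← Q.defectHom_apply, map_zero]

theorem defect_dimVec_quotBy (U : SubRep P) :
    Q.defect (P.quotBy U).dimVec = Q.defect P.dimVec - Q.defect U.dimVec := by
  rw [← U.dimVec_add_dimVec_quotBy, ← Q.defectHom_apply (_ + _), map_add]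
  exact (add_sub_cancel_left _ _).symm

theorem defect_comap_mkQ (U : SubRep P) (W : SubRep (P.quotBy U)) :
    Q.defect (SubRep.comap U.mkQ W).dimVec = Q.defect W.dimVec + Q.defect U.dimVec := by
  rw [SubRep.dimVec_comap_mkQ]
  exact map_add Q.defectHom _ _

namespace Indecomposable

theorem defect_neg (hP : P.Indecomposable) (hneg : Q.defect P.dimVec < 0) {W : SubRep P}
    (hW : W ≠ ⊥) : Q.defect W.dimVec < 0 := by
  obtain ⟨U, hU⟩ := exists_maximal_of_wellFoundedGT
    (fun U : SubRep P => ∀ W : SubRep P, Q.defect W.dimVec ≤ Q.defect U.dimVec)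
    (SubRep.exists_forall_le Q.defect)
  have hlt {W : SubRep P} (hUW : U < W) : Q.defect W.dimVec < Q.defect U.dimVec :=
    (hU.prop W).lt_of_ne fun heq => hU.not_prop_of_gt hUW (heq ▸ hU.prop)
  have hext : ExtVanishes (P.quotBy U) U.toRep := by
    refine extVanishes_of_defect_lt fun F' T' hF' _ => ?_
    have hF := hlt (SubRep.lt_comap_mkQ hF')
    have hT := hU.prop (SubRep.map U.subtype T')
    rw [defect_comap_mkQ] at hF
    rw [SubRep.dimVec_map_of_injective U.shortExact.injective] at hT
    rw [defect_dimVec_quotBy]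
    change Q.defect F'.dimVec < Q.defect U.dimVec - Q.defect T'.dimVec
    linarith
  obtain rfl | rfl := hP.eq_bot_or_eq_top_of_extVanishes hext
  · exact (hlt (bot_lt_iff_ne_bot.2 hW)).trans_eq defect_bot
  · refine absurd (hU.prop ⊥) ?_
    rw [defect_bot, SubRep.dimVec_top]
    exact hneg.not_ge

theorem defect_lt (hP : P.Indecomposable) {W₀ : SubRep P} (hpos : 0 < Q.defect W₀.dimVec)
    {W : SubRep P} (hW : W ≠ ⊤) : Q.defect W.dimVec < Q.defect P.dimVec := by
  obtain ⟨U, hU⟩ := exists_minimal_of_wellFoundedLT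
    (fun U : SubRep P => ∀ W : SubRep P, Q.defect W.dimVec ≤ Q.defect U.dimVec)
    (SubRep.exists_forall_le Q.defect)
  have hlt {W : SubRep P} (hWU : W < U) : Q.defect W.dimVec < Q.defect U.dimVec :=
    (hU.prop W).lt_of_ne fun heq => hU.not_prop_of_lt hWU (heq ▸ hU.prop)
  have hext : ExtVanishes (P.quotBy U) U.toRep := by
    refine extVanishes_of_defect_lt fun F' T' _ hT' => ?_
    have hF := hU.prop (SubRep.comap U.mkQ F')
    have hT := hlt (SubRep.map_subtype_lt hT')
    rw [defect_comap_mkQ] at hF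
    rw [SubRep.dimVec_map_of_injective U.shortExact.injective] at hT
    rw [defect_dimVec_quotBy]
    change Q.defect F'.dimVec < Q.defect U.dimVec - Q.defect T'.dimVec
    linarith
  obtain rfl | rfl := hP.eq_bot_or_eq_top_of_extVanishes hext
  · exact absurd (hU.prop W₀) (defect_bot.trans_lt hpos).not_ge
  · exact (hlt (lt_top_iff_ne_top.2 hW)).trans_eq (congr_arg Q.defect SubRep.dimVec_top)

end Indecomposable

end Defect

end QRep

/-! ### Indecomposables of nonzero defect -/

namespace QRep

open Module

section Retract

variable {Q : FinQuiver} {k : Type} [Field k] {P X L M : QRep Q k}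

/-- The total dimension of a representation. -/
noncomputable def totalDim (X : QRep Q k) : ℕ := ∑ i, finrank k (X.carrier i)

theorem totalDim_toRep_lt {U : SubRep X} (hU : U ≠ ⊤) : U.toRep.totalDim < X.totalDim := by
  obtain ⟨i, hi⟩ := not_forall.1 (mt U.eq_top_iff_mod.2 hU)
  exact Finset.sum_lt_sum (fun j _ => (U.mod j).finrank_le)
    ⟨i, Finset.mem_univ i, Submodule.finrank_lt hi⟩

theorem Hom.totalDim_le {s : Hom L X} (hs : ∀ i, Function.Injective (s.1 i)) :
    L.totalDim ≤ X.totalDim :=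
  Finset.sum_le_sum fun i _ => LinearMap.finrank_le_finrank_of_injective (hs i)

theorem exists_indecomposable_retract {ψ : Hom X M} (hψ : ψ ≠ 0) :
    ∃ (L : QRep Q k) (s : Hom L M) (r : Hom M L),
      L.Indecomposable ∧ r.comp s = Hom.id L ∧ r.comp ψ ≠ 0 := by
  induction hn : M.totalDim using Nat.strong_induction_on generalizing M with
  | _ n ih => ?_
  subst hn
  by_cases hM : M.Indecomposable
  · exact ⟨M, Hom.id M, Hom.id M, hM, rfl, hψ⟩
  have hstep {U W : SubRep M} (h : IsCompl U W) (hW : W ≠ ⊥)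
      (hU : (SubRep.projection h).comp ψ ≠ 0) :
      ∃ (L : QRep Q k) (s : Hom L M) (r : Hom M L),
        L.Indecomposable ∧ r.comp s = Hom.id L ∧ r.comp ψ ≠ 0 := by
    have htop : U ≠ ⊤ := fun hU => hW (eq_bot_of_isCompl_top (hU ▸ h.symm))
    obtain ⟨L, s, r, hL, hrs, hrψ⟩ := ih _ (totalDim_toRep_lt htop) hU rfl
    refine ⟨L, U.subtype.comp s, r.comp (SubRep.projection h), hL, ?_, hrψ⟩
    refine Eq.trans ?_ hrs
    exact congr_arg (fun g => (r.comp g).comp s) (SubRep.projection_comp_subtype h)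
  rw [indecomposable_iff] at hM
  push Not at hM
  obtain ⟨U, W, h, hU, hW⟩ := hM fun hbot => hψ <| Hom.range_eq_bot_iff.1 <|
    le_bot_iff.1 (hbot ▸ le_top)
  by_cases hproj : (SubRep.projection h).comp ψ = 0
  · refine hstep h.symm hU fun hproj' => hψ (Hom.ext fun i x => ?_)
    rw [← SubRep.subtype_projection_add h i (ψ.1 i x), Hom.apply_eq_of_comp_eq hproj,
      Hom.apply_eq_of_comp_eq hproj']
    exact (congr_arg₂ _ (map_zero _) (map_zero _)).trans (add_zero _)
  · exact hstep h hW hproj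

theorem Hom.injective_of_comp_eq_id {s : Hom L X} {r : Hom X L} (h : r.comp s = Hom.id L)
    (i : Q.V) : Function.Injective (s.1 i) :=
  Function.LeftInverse.injective (Hom.apply_eq_of_comp_eq h i)

theorem Hom.ker_comp_of_injective {g : Hom X M} (hg : ∀ i, Function.Injective (g.1 i))
    {f : Hom L X} : (g.comp f).ker = f.ker :=
  SubRep.mod_injective <| funext fun i =>
    LinearMap.ker_comp_of_ker_eq_bot _ (LinearMap.ker_eq_bot.2 (hg i))

theorem Hom.range_ne_bot_of_injective {s : Hom L X} (hs : ∀ i, Function.Injective (s.1 i))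
    (hL : (⊥ : SubRep L) ≠ ⊤) : s.range ≠ ⊥ := fun hbot =>
  hL ((Hom.ker_eq_bot_iff.2 hs).symm.trans (Hom.ker_eq_top_iff.2 (Hom.range_eq_bot_iff.1 hbot)))

theorem Hom.exists_injective_of_ker_eq {K : SubRep X} {f : Hom X M} (hK : f.ker = K) :
    ∃ j : Hom (X.quotBy K) M, ∀ i, Function.Injective (j.1 i) := by
  subst hK
  obtain ⟨j, hj⟩ := Hom.exists_eq_comp f.ker.shortExact.surjective f fun i =>
    (f.ker.mod i).ker_mkQ.le
  refine ⟨j, fun i => (injective_iff_map_eq_zero _).2 fun y hy => ?_⟩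
  obtain ⟨x, rfl⟩ := f.ker.shortExact.surjective i y
  exact (Submodule.Quotient.mk_eq_zero _).2 ((Hom.apply_eq_of_comp_eq hj i x).symm.trans hy)

theorem Hom.isCompl_range_ker_of_ker_comp_le {θ : Hom P P} (h : (θ.comp θ).ker ≤ θ.ker) :
    IsCompl θ.range θ.ker := by
  refine SubRep.isCompl_of_disjoint (disjoint_iff_inf_le.2 fun i y hy => ?_)
    Hom.dimVec_range_add_dimVec_ker
  obtain ⟨x, rfl⟩ := Hom.mem_range_mod.1 hy.1
  exact h i hy.2

theorem exists_ne_zero_ker_ne_bot [IsAlgClosed k] (hP : (⊥ : SubRep P) ≠ ⊤) (hbrick : ¬P.IsBrick) :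
    ∃ θ : Hom P P, θ ≠ 0 ∧ θ.ker ≠ ⊥ := by
  rw [Ne, eq_comm, SubRep.eq_bot_iff_mod, not_forall] at hP
  obtain ⟨i, hi⟩ := hP
  have : Nontrivial (P.carrier i) := (Submodule.nontrivial_iff k).1 ⟨⟨_, _, hi⟩⟩
  have hid : Hom.id P ≠ 0 := fun hid => by
    obtain ⟨x, hx⟩ := exists_ne (0 : P.carrier i)
    exact hx (DFunLike.congr_fun (congr_fun (congr_arg Subtype.val hid) i) x)
  obtain ⟨f, hf⟩ := not_forall.1 (mt (finrank_eq_one_iff_of_nonzero' (Hom.id P) hid).2 hbrick)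
  obtain ⟨c, hc⟩ := Module.End.exists_eigenvalue (f.1 i)
  obtain ⟨x, hx⟩ := hc.exists_hasEigenvector
  refine ⟨f - c • Hom.id P, sub_ne_zero.2 fun h => hf ⟨c, h.symm⟩, fun hker => hx.2 ?_⟩
  refine (Submodule.eq_bot_iff _).1 ((SubRep.eq_bot_iff_mod _).1 hker i) x ?_
  exact sub_eq_zero.2 hx.apply_eq_smul

theorem Indecomposable.exists_square_zero [IsAlgClosed k] (hP : P.Indecomposable)
    (hbrick : ¬P.IsBrick) :
    ∃ θ : Hom P P, θ ≠ 0 ∧ θ.range ≤ θ.ker ∧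
      ∀ θ' : Hom P P, θ' ≠ 0 → θ.ker ≤ θ'.ker → θ'.ker = θ.ker := by
  obtain ⟨θ, ⟨hθ0, hθ⟩, hmax⟩ := exists_maximalFor_of_wellFoundedGT
    (fun θ : Hom P P => θ ≠ 0 ∧ θ.ker ≠ ⊥) Hom.ker
    (exists_ne_zero_ker_ne_bot hP.bot_ne_top hbrick)
  have hmax' (θ' : Hom P P) (h0 : θ' ≠ 0) (hle : θ.ker ≤ θ'.ker) : θ'.ker = θ.ker :=
    (hmax ⟨h0, ne_bot_of_le_ne_bot hθ hle⟩ hle).antisymm hle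
  refine ⟨θ, hθ0, ?_, hmax'⟩
  have hsq : θ.comp θ = 0 := by
    by_contra hne
    have hle : θ.ker ≤ (θ.comp θ).ker := fun i x hx =>
      (congr_arg (θ.1 i) (LinearMap.mem_ker.1 hx)).trans (map_zero _)
    have hcompl := Hom.isCompl_range_ker_of_ker_comp_le (hmax' _ hne hle).le
    rcases hP.eq_bot_or_eq_top hcompl with hbot | htop
    · exact hθ0 (Hom.range_eq_bot_iff.1 hbot)
    · exact hθ (eq_bot_of_top_isCompl (htop ▸ hcompl))
  intro i y hy
  obtain ⟨x, rfl⟩ := Hom.mem_range_mod.1 hy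
  exact Hom.apply_eq_of_comp_eq hsq i x

/-- The witnesses are the kernel `K` of a square-zero endomorphism, chosen with maximal kernel, and
an indecomposable summand `L` of `K` not annihilated by it. -/
theorem Indecomposable.exists_retract_of_not_isBrick [IsAlgClosed k] (hP : P.Indecomposable)
    (hbrick : ¬P.IsBrick) :
    ∃ (K : SubRep P) (L : QRep Q k) (s : Hom L K.toRep) (r : Hom K.toRep L)
      (j : Hom (P.quotBy K) L), K ≠ ⊤ ∧ L.Indecomposable ∧ r.comp s = Hom.id L ∧
        ∀ i, Function.Injective (j.1 i) := by
  obtain ⟨θ, hθ, hrange, hmax⟩ := hP.exists_square_zero hbrick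
  obtain ⟨ψ, hψ⟩ := Hom.exists_comp_eq θ.ker.shortExact.injective θ fun i => by
    rintro _ ⟨x, rfl⟩
    exact ⟨⟨θ.1 i x, hrange i (Hom.mem_range_mod.2 ⟨x, rfl⟩)⟩, rfl⟩
  have hψ0 : ψ ≠ 0 := by
    rintro rfl
    exact hθ (hψ.symm.trans (Hom.ext fun _ _ => rfl))
  obtain ⟨L, s, r, hL, hrs, hrψ⟩ := exists_indecomposable_retract hψ0
  have hle : θ.ker ≤ (r.comp ψ).ker := fun i x hx => by
    have hψx : ψ.1 i x = 0 :=
      Subtype.ext ((Hom.apply_eq_of_comp_eq hψ i x).trans (LinearMap.mem_ker.1 hx))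
    exact (congr_arg (r.1 i) hψx).trans (map_zero _)
  have hs := Hom.injective_of_comp_eq_id hrs
  have hker : (r.comp ψ).ker = θ.ker := by
    have hker' : ((θ.ker.subtype.comp s).comp (r.comp ψ)).ker = (r.comp ψ).ker :=
      Hom.ker_comp_of_injective fun i => Subtype.val_injective.comp (hs i)
    rw [← hker']
    refine hmax _ (fun h0 => hrψ ?_) (hle.trans_eq hker'.symm)
    rw [← Hom.ker_eq_top_iff, ← hker', Hom.ker_eq_top_iff, h0]
  obtain ⟨j, hj⟩ := Hom.exists_injective_of_ker_eq hker
  exact ⟨θ.ker, L, s, r, j, mt Hom.ker_eq_top_iff.1 hθ, hL, hrs, hj⟩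

theorem Indecomposable.not_extVanishes (hP : P.Indecomposable) {K : SubRep P} (hK : K ≠ ⊤)
    {s : Hom L K.toRep} {r : Hom K.toRep L} (hrs : r.comp s = Hom.id L)
    (hL : (⊥ : SubRep L) ≠ ⊤) : ¬ExtVanishes (P.quotBy K) L := by
  intro hext
  obtain ⟨r', hr'⟩ := K.shortExact.exists_extension hext r
  have hrs' : r'.comp (K.subtype.comp s) = Hom.id L :=
    (congr_arg (fun g => Hom.comp g s) hr').trans hrs
  rcases hP.eq_bot_or_eq_top (Hom.isCompl_range_ker hrs') with hbot | htop
  · exact Hom.range_ne_bot_of_injective (Hom.injective_of_comp_eq_id hrs') hL hbot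
  · refine hK (top_le_iff.1 (htop.ge.trans fun i x hx => ?_))
    obtain ⟨y, rfl⟩ := Hom.mem_range_mod.1 hx
    exact (s.1 i y).2

end Retract

section Brick

variable {Q : AffineQuiver} {k : Type} [Field k] {P L : QRep Q.toFinQuiver k}

theorem IsBrick.extVanishes_of_defect_ne_zero (hL : L.IsBrick) (hd : Q.defect L.dimVec ≠ 0) :
    ExtVanishes L L := by
  have hle := eulerForm_le_finrank_hom L L
  rw [hL, Nat.cast_one] at hle
  exact hL.extVanishes (hle.antisymm (Q.titsForm_pos hd))

theorem Hom.dimVec_range_of_injective {X Y : QRep Q.toFinQuiver k} {s : Hom X Y}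
    (hs : ∀ i, Function.Injective (s.1 i)) : s.range.dimVec = X.dimVec :=
  (SubRep.dimVec_map_of_injective hs ⊤).trans SubRep.dimVec_top

theorem Indecomposable.defect_ne_zero_of_hom (hP : P.Indecomposable) (hd : Q.defect P.dimVec ≠ 0)
    (hL : L.Indecomposable) {s : Hom L P} (hs : ∀ i, Function.Injective (s.1 i)) {f : Hom P L}
    (hf : f.ker ≠ ⊤) : Q.defect L.dimVec ≠ 0 := by
  rcases hd.lt_or_gt with hneg | hpos
  · have hrange := Hom.range_ne_bot_of_injective hs hL.bot_ne_top
    rw [← Hom.dimVec_range_of_injective hs]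
    exact (hP.defect_neg hneg hrange).ne
  · have hker := hP.defect_lt (W₀ := ⊤) (hpos.trans_eq (congr_arg _ SubRep.dimVec_top.symm)) hf
    have hrange : Q.defect f.range.dimVec + Q.defect f.ker.dimVec = Q.defect P.dimVec := by
      rw [← Hom.dimVec_range_add_dimVec_ker (f := f)]
      exact (map_add Q.defectHom _ _).symm
    have hL' := hL.defect_lt (W₀ := f.range) (by linarith) hL.bot_ne_top
    rw [defect_bot] at hL'
    exact hL'.ne'

theorem Indecomposable.isBrick [IsAlgClosed k] (hP : P.Indecomposable)
    (hd : Q.defect P.dimVec ≠ 0) : P.IsBrick := by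
  induction hn : P.totalDim using Nat.strong_induction_on generalizing P with
  | _ n ih => ?_
  subst hn
  by_contra hbrick
  obtain ⟨K, L, s, r, j, hK, hL, hrs, hj⟩ := hP.exists_retract_of_not_isBrick hbrick
  have hs := Hom.injective_of_comp_eq_id hrs
  have hlt : L.totalDim < P.totalDim := (Hom.totalDim_le hs).trans_lt (totalDim_toRep_lt hK)
  have hker : (j.comp K.mkQ).ker = K := (Hom.ker_comp_of_injective hj).trans K.ker_mkQ
  have hdL : Q.defect L.dimVec ≠ 0 :=
    hP.defect_ne_zero_of_hom hd hL (s := K.subtype.comp s) (f := j.comp K.mkQ)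
      (fun i => Subtype.val_injective.comp (hs i)) (hker.trans_ne hK)
  have hext := (ih _ hlt hL hdL rfl).extVanishes_of_defect_ne_zero hdL
  exact hP.not_extVanishes hK hrs hL.bot_ne_top (hext.of_injective hj)

end Brick

end QRep

/-! ### Existence of indecomposables -/

namespace QRep

open Module

section Extension

variable {Q : FinQuiver} {k : Type} [Field k] {U W : QRep Q k}

/-- The extension of `W` by `U` classified by the class of `w` in `Ext(W, U)`. -/
def extension (w : ArrowMaps W U) : QRep Q k where
  carrier i := U.carrier i × W.carrier i
  map a := ((U.map a).coprod (w a)).prod (W.map a ∘ₗ LinearMap.snd k _ _)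

namespace extension

variable (w : ArrowMaps W U)

/-- The inclusion of the subobject into an extension. -/
def inl : Hom U (extension w) :=
  Hom.mk (fun i => LinearMap.inl k (U.carrier i) (W.carrier i)) fun a u => by
    change _ = (U.map a u + w a 0, W.map a 0)
    rw [map_zero, map_zero, add_zero]
    rfl

/-- The projection of an extension onto the quotient. -/
def snd : Hom (extension w) W :=
  Hom.mk (fun i => LinearMap.snd k (U.carrier i) (W.carrier i)) fun _ _ => rfl

theorem shortExact : ShortExact (inl w) (snd w) where
  injective _ := LinearMap.inl_injective
  surjective _ := LinearMap.snd_surjective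
  ker_eq_range _ := LinearMap.ker_snd _ _ _

theorem dimVec_eq : (extension w).dimVec = U.dimVec + W.dimVec :=
  funext fun _ => (congr_arg Nat.cast finrank_prod).trans (Nat.cast_add _ _)

/-- The vertexwise splitting of an extension, which commutes with the arrows up to `w`. -/
def inr : VertexMaps W (extension w) := fun i => LinearMap.inr k (U.carrier i) (W.carrier i)

theorem homDiff_inr_apply (a : Q.A) (x : W.carrier (Q.src a)) :
    homDiff W (extension w) (inr w) a x = (inl w).1 _ (w a x) := by
  refine sub_eq_iff_eq_add.2 (Prod.ext ?_ (zero_add _).symm)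
  change U.map a 0 + w a x = w a x + 0
  rw [map_zero, add_comm]

theorem mem_range_homDiff {w : ArrowMaps W U} {r : Hom (extension w) U}
    (hr : r.comp (inl w) = Hom.id U) : w ∈ LinearMap.range (homDiff W U) := by
  refine ⟨fun i => r.1 i ∘ₗ inr w i, funext fun a => LinearMap.ext fun x => ?_⟩
  have hw := (congr_arg (r.1 _) (homDiff_inr_apply w a x)).trans (Hom.apply_eq_of_comp_eq hr _ _)
  refine Eq.trans ?_ hw
  refine Eq.trans ?_ (map_sub _ _ _).symm
  exact congr_arg (· - _) (r.comm a _).symm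

end extension

theorem exists_finrank_hom_lt (h : ¬ExtVanishes W U) :
    ∃ E : QRep Q k, E.dimVec = U.dimVec + W.dimVec ∧
      finrank k (Hom E E) < finrank k (Hom U U) + finrank k (Hom W U) +
        (finrank k (Hom U W) + finrank k (Hom W W)) := by
  obtain ⟨w, hw⟩ := not_forall.1 h
  have hshort := extension.shortExact w
  refine ⟨extension w, extension.dimVec_eq w, ?_⟩
  have hsub := hshort.finrank_hom_left_lt fun ⟨_, hr⟩ => hw (extension.mem_range_homDiff hr)
  have hquot := hshort.finrank_hom_left_le W
  have hE := hshort.finrank_hom_right_le (extension w)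
  omega

end Extension

section DirectSum

variable {Q : FinQuiver} {k : Type} [Field k] {V : QRep Q k} {U W : SubRep V} (h : IsCompl U W)
  {N : QRep Q k}

theorem projection_comp_add (f : Hom N U.toRep) (g : Hom N W.toRep) :
    (SubRep.projection h).comp (U.subtype.comp f + W.subtype.comp g) = f :=
  Hom.ext fun i _ => (map_add _ _ _).trans <|
    (congr_arg₂ _ (Hom.apply_eq_of_comp_eq (SubRep.projection_comp_subtype h) i _)
      (Hom.apply_eq_of_comp_eq (SubRep.projection_comp_subtype_right h) i _)).trans (add_zero _)

theorem add_comp_subtype (f : Hom U.toRep N) (g : Hom W.toRep N) :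
    (f.comp (SubRep.projection h) + g.comp (SubRep.projection h.symm)).comp U.subtype = f :=
  Hom.ext fun i x => (congr_arg₂ (f.1 i · + g.1 i ·)
    (Hom.apply_eq_of_comp_eq (SubRep.projection_comp_subtype h) i x)
    (Hom.apply_eq_of_comp_eq (SubRep.projection_comp_subtype_right h.symm) i x)).trans <|
      (congr_arg _ (map_zero _)).trans (add_zero _)

variable (N)

include h

theorem finrank_hom_add_le_right :
    finrank k (Hom N U.toRep) + finrank k (Hom N W.toRep) ≤ finrank k (Hom N V) := by
  rw [← finrank_prod]
  refine LinearMap.finrank_le_finrank_of_injective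
    (f := (Hom.compₗ U.subtype).coprod (Hom.compₗ W.subtype))
    (Function.LeftInverse.injective
      (g := fun x => ((SubRep.projection h).comp x, (SubRep.projection h.symm).comp x))
      fun ⟨f, g⟩ => Prod.ext (projection_comp_add h f g)
        ((congr_arg _ (add_comm _ _)).trans (projection_comp_add h.symm g f)))

theorem finrank_hom_add_le_left :
    finrank k (Hom U.toRep N) + finrank k (Hom W.toRep N) ≤ finrank k (Hom V N) := by
  rw [← finrank_prod]
  refine LinearMap.finrank_le_finrank_of_injective
    (f := (Hom.compₗ.flip (SubRep.projection h)).coprod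
      (Hom.compₗ.flip (SubRep.projection h.symm)))
    (Function.LeftInverse.injective (g := fun x => (x.comp U.subtype, x.comp W.subtype))
      fun ⟨f, g⟩ => Prod.ext (add_comp_subtype h f g)
        ((congr_arg (Hom.comp · W.subtype) (add_comm _ _)).trans (add_comp_subtype h.symm g f)))

theorem finrank_hom_add_le :
    finrank k (Hom U.toRep U.toRep) + finrank k (Hom W.toRep U.toRep) +
      (finrank k (Hom U.toRep W.toRep) + finrank k (Hom W.toRep W.toRep)) ≤
        finrank k (Hom V V) :=
  (add_le_add (finrank_hom_add_le_left h U.toRep) (finrank_hom_add_le_left h W.toRep)).trans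
    (finrank_hom_add_le_right h V)

theorem dimVec_add_dimVec_of_isCompl : U.dimVec + W.dimVec = V.dimVec :=
  funext fun i => (Nat.cast_add _ _).symm.trans <| congr_arg Nat.cast <|
    Submodule.finrank_add_eq_of_isCompl (SubRep.isCompl_iff_mod.1 h i)

theorem extVanishes_of_isCompl
    (hmin : ∀ E : QRep Q k, E.dimVec = V.dimVec → finrank k (Hom V V) ≤ finrank k (Hom E E)) :
    ExtVanishes W.toRep U.toRep := by
  by_contra hext
  obtain ⟨E, hE, hlt⟩ := exists_finrank_hom_lt hext
  exact ((finrank_hom_add_le h).trans (hmin E (hE.trans (dimVec_add_dimVec_of_isCompl h)))).not_gt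
    hlt

end DirectSum

section Existence

theorem exists_dimVec_eq {Q : FinQuiver} (k : Type) [Field k] {α : Q.V → ℤ}
    (hα : ∀ i, 0 ≤ α i) : ∃ V : QRep Q k, V.dimVec = α :=
  ⟨{ carrier := fun i => Fin (α i).toNat → k, map := fun _ => 0 }, funext fun i =>
    (congr_arg Nat.cast (finrank_fin_fun k)).trans (Int.toNat_of_nonneg (hα i))⟩

variable {Q : AffineQuiver} (k : Type) [Field k] {α : Q.V → ℤ}

theorem exists_indecomposable_dimVec_eq (hα : ∀ i, 0 ≤ α i) (hq : Q.titsForm α = 1)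
    (hd : Q.defect α ≠ 0) :
    ∃ P : QRep Q.toFinQuiver k, P.Indecomposable ∧ P.dimVec = α := by
  obtain ⟨V, rfl, hmin⟩ := exists_minimalFor_of_wellFoundedLT
    (fun V : QRep Q.toFinQuiver k => V.dimVec = α) (fun V => finrank k (Hom V V))
    (exists_dimVec_eq k hα)
  have hmin' (E : QRep Q.toFinQuiver k) (hE : E.dimVec = V.dimVec) :
      finrank k (Hom V V) ≤ finrank k (Hom E E) := le_of_not_gt fun hlt =>
    hlt.not_ge (hmin hE hlt.le)
  refine ⟨V, indecomposable_iff.2 ⟨fun htop => hd ?_, fun U W h => ?_⟩, rfl⟩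
  · rw [← SubRep.dimVec_top, ← htop, defect_bot]
  by_contra! hne
  have hdim := dimVec_add_dimVec_of_isCompl h
  have hUW := extVanishes_iff.1 (extVanishes_of_isCompl h.symm hmin')
  have hWU := extVanishes_iff.1 (extVanishes_of_isCompl h hmin')
  refine hd (hdim ▸ Q.defect_add_eq_zero (mt SubRep.dimVec_eq_zero hne.1)
    (mt SubRep.dimVec_eq_zero hne.2) (hdim ▸ hq) ?_ ?_)
  · exact (Nat.cast_nonneg _).trans_eq hUW.symm
  · exact (Nat.cast_nonneg _).trans_eq hWU.symm

end Existence

end QRep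

theorem stable_of_irregular_root_unique_general (Q : AffineQuiver) {k : Type} [Field k]
    [IsAlgClosed k] (α : Q.V → ℤ) (hpos : ∀ i, 0 ≤ α i) (hreal : Q.titsForm α = 1)
    (hirr : Q.defect α ≠ 0) :
    (∀ P : QRep Q.toFinQuiver k, P.Indecomposable → P.dimVec = α →
        ∀ X : QRep Q.toFinQuiver.double k, PreprojRel Q.toFinQuiver X →
          X.IsCanonicallyStable α → X.dimVec = α →
            Nonempty (RepIso X (extendZero P))) ∧
      (∃ X : QRep Q.toFinQuiver.double k, PreprojRel Q.toFinQuiver X ∧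
        X.IsCanonicallyStable α ∧ X.dimVec = α) ∧
      ∀ X Y : QRep Q.toFinQuiver.double k,
        PreprojRel Q.toFinQuiver X → X.IsCanonicallyStable α → X.dimVec = α →
        PreprojRel Q.toFinQuiver Y → Y.IsCanonicallyStable α → Y.dimVec = α →
          Nonempty (RepIso X Y) := by
  have hunique (X Y : QRep Q.toFinQuiver.double k) (hXrel : PreprojRel Q.toFinQuiver X)
      (hX : X.IsCanonicallyStable α) (hXα : X.dimVec = α) (hYrel : PreprojRel Q.toFinQuiver Y)
      (hY : Y.IsCanonicallyStable α) (hYα : Y.dimVec = α) : Nonempty (RepIso X Y) := by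
    refine hX.nonempty_repIso_of_eulerForm_pos hXrel hYrel hY ?_
    have hα : 0 < Q.titsForm α := hreal ▸ one_pos
    rw [hXα, hYα]
    exact add_pos hα hα
  have hstable (P : QRep Q.toFinQuiver k) (hP : P.Indecomposable) (hPα : P.dimVec = α) :
      (extendZero P).IsCanonicallyStable α := by
    subst hPα
    exact (hP.isBrick hirr).isCanonicallyStable_extendZero hreal
  obtain ⟨P, hP, hPα⟩ := QRep.exists_indecomposable_dimVec_eq k hpos hreal hirr
  exact ⟨fun P hP hPα X hXrel hX hXα =>
      hunique X _ hXrel hX hXα (QRep.preprojRel_extendZero P) (hstable P hP hPα) hPα,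
    ⟨extendZero P, QRep.preprojRel_extendZero P, hstable P hP hPα, hPα⟩, hunique⟩

/-- For an irregular positive real root `α` of an affine quiver (i.e. with nonzero
defect), every `λ_α`-stable representation of `Π_Q` over `ℂ` with dimension vector `α`
is isomorphic to `P̃_α`, obtained from the unique indecomposable representation `P_α` of
`Q` of dimension `α` by letting all reverse arrows act as zero.  In particular, up to
isomorphism there is exactly one `λ_α`-stable `Π_Q`-representation of dimension `α`. -/
theorem stable_of_irregular_root_unique
    (Q : AffineQuiver) (α : Q.V → ℤ)
    (hpos : ∀ i, 0 ≤ α i) (hreal : Q.titsForm α = 1)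
    (hirr : Q.defect α ≠ 0) :
    (∀ P : QRep Q.toFinQuiver ℂ, P.Indecomposable → P.dimVec = α →
        ∀ X : QRep Q.toFinQuiver.double ℂ, PreprojRel Q.toFinQuiver X →
          LamAlphaStable α X → X.dimVec = α →
            Nonempty (RepIso X (extendZero P))) ∧
      (∃ X : QRep Q.toFinQuiver.double ℂ, PreprojRel Q.toFinQuiver X ∧
        LamAlphaStable α X ∧ X.dimVec = α) ∧
      ∀ X Y : QRep Q.toFinQuiver.double ℂ,
        PreprojRel Q.toFinQuiver X → LamAlphaStable α X → X.dimVec = α →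
        PreprojRel Q.toFinQuiver Y → LamAlphaStable α Y → Y.dimVec = α →
          Nonempty (RepIso X Y) := by
  simpa only [lamAlphaStable_iff] using
    stable_of_irregular_root_unique_general Q α hpos hreal hirr
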